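/- Let f ∈ ℂ[x_1,…,x_n]_d be sufficiently generic, K_d(f) the associated order-d Kalman matrix, Δ the discriminant of the characteristic polynomial of A, and Δ_d the discriminant of the characteristic polynomial of ρ_d(A), both viewed as polynomials in the entries of A. Then every irreducible factor of Δ_d is either a factor of det K_d(f) or a factor of Δ, and in this way one obtains exactly all irreducible factors of det K_d(f) that do not depend on f. Moreover, the irreducible factors of Δ divide Δ_d but do not divide det K_d(f). -/

import Mathlib

noncomputable section

/-! ## Zariski topology on complex affine space -/

/-- The Zariski topology on the affine space `ι → ℂ`: the basic open sets are the
complements of hypersurfaces. -/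
def zTop (ι : Type*) : TopologicalSpace (ι → ℂ) :=
  TopologicalSpace.generateFrom
    {U | ∃ p : MvPolynomial ι ℂ, U = {x | MvPolynomial.eval x p ≠ 0}}

/-- Zariski open subset of affine space. -/
def zOpen {ι : Type*} (U : Set (ι → ℂ)) : Prop := @IsOpen _ (zTop ι) U

/-- Zariski closed subset of affine space. -/
def zClosed {ι : Type*} (Z : Set (ι → ℂ)) : Prop := @IsClosed _ (zTop ι) Z

/-- Zariski density. -/
def zDense {ι : Type*} (S : Set (ι → ℂ)) : Prop := @Dense _ (zTop ι) S

/-- Zariski closure. -/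
def zClosure {ι : Type*} (S : Set (ι → ℂ)) : Set (ι → ℂ) := @closure _ (zTop ι) S

/-- Irreducibility in the Zariski topology. -/
def zIrred {ι : Type*} (S : Set (ι → ℂ)) : Prop := @IsIrreducible _ (zTop ι) S

/-- The dimension of a subset of affine space: the topological Krull dimension of the
subspace topology induced by the Zariski topology. -/
def zDim {ι : Type*} (S : Set (ι → ℂ)) : WithBot ℕ∞ :=
  @topologicalKrullDim S (TopologicalSpace.induced Subtype.val (zTop ι))

/-- The common zero set of a family of polynomials. -/
def vanishSet {ι : Type*} (S : Set (MvPolynomial ι ℂ)) : Set (ι → ℂ) :=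
  {x | ∀ p ∈ S, MvPolynomial.eval x p = 0}

/-- The ideal of all polynomials vanishing on a subset of affine space. -/
def vanishingIdealOf {ι : Type*} (X : Set (ι → ℂ)) : Ideal (MvPolynomial ι ℂ) where
  carrier := {p | ∀ x ∈ X, MvPolynomial.eval x p = 0}
  add_mem' := by
    intro a b ha hb x hx
    simp [ha x hx, hb x hx]
  zero_mem' := by
    intro x hx
    simp
  smul_mem' := by
    intro c p hp x hx
    simp [smul_eq_mul, hp x hx]

/-- A subset of `ι → ℂ` is a cone if it is stable under scalar multiplication. -/
def IsCone {ι : Type*} (X : Set (ι → ℂ)) : Prop :=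
  ∀ (c : ℂ) (v : ι → ℂ), v ∈ X → c • v ∈ X

/-- The affine-linear subspace cut out by `k` affine-linear equations whose coefficients are
recorded by `a` (the `none` coordinate records the constant term). -/
def affSlice {ι : Type*} [Fintype ι] {k : ℕ} (a : Fin k × Option ι → ℂ) : Set (ι → ℂ) :=
  {x | ∀ j : Fin k, a (j, none) + ∑ i : ι, a (j, some i) * x i = 0}

/-- `hasConeDegree C k δ` : the projective variety with affine cone `C ⊆ ℂ^ι` and projective
dimension `k` has degree `δ`, expressed by saying that a generic affine-linear slice of `C` of
codimension `k + 1` consists of exactly `δ` points. -/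
def hasConeDegree {ι : Type*} [Fintype ι] (C : Set (ι → ℂ)) (k δ : ℕ) : Prop :=
  ∃ U : Set (Fin (k + 1) × Option ι → ℂ), zOpen U ∧ zDense U ∧
    ∀ a ∈ U, (C ∩ affSlice a).ncard = δ

/-! ## Eigenvectors and the Kalman variety -/

/-- `v` is an eigenvector of the matrix `A`. -/
def IsEigenvector {n : ℕ} (A : Matrix (Fin n) (Fin n) ℂ) (v : Fin n → ℂ) : Prop :=
  v ≠ 0 ∧ ∃ lam : ℂ, A.mulVec v = lam • v

/-- The space of `n × n` complex matrices, presented as an affine space. -/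
abbrev MatSpace (n : ℕ) := Fin n × Fin n → ℂ

/-- The matrix corresponding to a point of `MatSpace n`. -/
def toMat {n : ℕ} (A : MatSpace n) : Matrix (Fin n) (Fin n) ℂ :=
  Matrix.of fun i j => A (i, j)

/-- The affine cone over the Kalman variety `𝒦(X)` of the projective variety whose affine
cone is `X`: all matrices having an eigenvector lying on `X`. -/
def kalmanCone {n : ℕ} (X : Set (Fin n → ℂ)) : Set (MatSpace n) :=
  {A | ∃ v ∈ X, IsEigenvector (toMat A) v}



/-! ## Symmetric powers of matrices and Kalman matrices -/

/-- Index set for the monomials of degree `d` in `n` variables. -/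
abbrev MonIdx (n d : ℕ) := Sym (Fin n) d

/-- The exponent vector of the monomial indexed by `σ`. -/
def monExp {n d : ℕ} (σ : MonIdx n d) : Fin n →₀ ℕ :=
  Multiset.toFinsupp (σ : Multiset (Fin n))

/-- The generic `n × n` matrix, whose entries are the variables of `ℂ[A]`. -/
def genMat (n : ℕ) : Matrix (Fin n) (Fin n) (MvPolynomial (Fin n × Fin n) ℂ) :=
  Matrix.of fun i j => MvPolynomial.X (i, j)

/-- The `d`-th symmetric power `ρ_d(A)` of a square matrix `A`, i.e. the matrix (in the basis of
monomials of degree `d`) of the induced action of `A` on forms of degree `d`: the entry at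
`(τ, σ)` is the coefficient of `x^σ` in `(A·x)^τ`. -/
def symPow {R : Type*} [CommRing R] {n : ℕ} (d : ℕ) (A : Matrix (Fin n) (Fin n) R) :
    Matrix (MonIdx n d) (MonIdx n d) R :=
  Matrix.of fun τ σ =>
    MvPolynomial.coeff (monExp σ)
      (∏ j : Fin n, (∑ k : Fin n, MvPolynomial.C (A j k) * MvPolynomial.X k) ^ (monExp τ j))

/-- The coefficient vector of a form of degree `d`. -/
def coeffVec {n : ℕ} (d : ℕ) (f : MvPolynomial (Fin n) ℂ) : MonIdx n d → ℂ :=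
  fun σ => MvPolynomial.coeff (monExp σ) f

/-- The form of degree `d` with coefficient vector `c`. -/
def polyOf {n d : ℕ} (c : MonIdx n d → ℂ) : MvPolynomial (Fin n) ℂ :=
  ∑ σ : MonIdx n d, MvPolynomial.monomial (monExp σ) (c σ)

/-- The rectangular Kalman matrix of order `d` associated with a `p × N` coefficient matrix `C`:
its rows are the rows of `C`, `C·ρ_d(A)`, ..., `C·ρ_d(A)^{t-1}` for the generic matrix `A`. -/
def kalmanMat {n d p : ℕ} (t : ℕ) (C : Matrix (Fin p) (MonIdx n d) ℂ) :
    Matrix (Fin t × Fin p) (MonIdx n d) (MvPolynomial (Fin n × Fin n) ℂ) :=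
  Matrix.of fun r τ =>
    ∑ κ : MonIdx n d, MvPolynomial.C (C r.2 κ) * ((symPow d (genMat n)) ^ (r.1 : ℕ)) κ τ

/-- The square Kalman matrix `K_d(f)` of a form `f` with coefficient vector `c`: the rows are
`C_f ρ_d(A)^i` for `i = 0, …, N - 1` (indexed by monomials through a fixed enumeration). -/
def kalmanSq {n : ℕ} (d : ℕ) (c : MonIdx n d → ℂ) :
    Matrix (MonIdx n d) (MonIdx n d) (MvPolynomial (Fin n × Fin n) ℂ) :=
  Matrix.of fun σ τ =>
    ∑ κ : MonIdx n d, MvPolynomial.C (c κ) *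
      ((symPow d (genMat n)) ^ ((Fintype.equivFin (MonIdx n d)) σ : ℕ)) κ τ

/-- The determinant of the square Kalman matrix of order `d`. -/
def kalmanDet {n : ℕ} (d : ℕ) (c : MonIdx n d → ℂ) : MvPolynomial (Fin n × Fin n) ℂ :=
  (kalmanSq d c).det

/-- The locus of matrices at which all maximal minors of a (rectangular) matrix of polynomials
in `ℂ[A]` vanish. -/
def maxMinorsZeroSet {n d : ℕ} {ridx : Type*}
    (M : Matrix ridx (MonIdx n d) (MvPolynomial (Fin n × Fin n) ℂ)) : Set (MatSpace n) :=
  {A | ∀ e : MonIdx n d → ridx, Function.Injective e →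
    MvPolynomial.eval A (Matrix.det (Matrix.of fun σ τ => M (e σ) τ)) = 0}



/-! ## Polarizations and μ-Kalman varieties -/

/-- Evaluation of the multihomogeneous polarization `f_μ` of `f` at a tuple of vectors
`v_1, …, v_s` (up to a nonzero rational normalization constant): the coefficient of `t^μ`
in `f(t_1 v_1 + ⋯ + t_s v_s)`. -/
def polarEval {n s : ℕ} (f : MvPolynomial (Fin n) ℂ) (μ : Fin s → ℕ)
    (v : Fin s → Fin n → ℂ) : ℂ :=
  MvPolynomial.coeff (Finsupp.equivFunOnFinite.symm μ)
    (MvPolynomial.eval₂ MvPolynomial.C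
      (fun k => ∑ i : Fin s, MvPolynomial.C (v i k) * MvPolynomial.X i) f)

/-- The affine cone over the `μ`-Kalman variety `𝒦_μ(f)`: the Zariski closure of the set of
matrices admitting linearly independent eigenvectors `v_1, …, v_s` with `f_μ(v_1, …, v_s) = 0`. -/
def muKalmanCone {n : ℕ} (f : MvPolynomial (Fin n) ℂ) {s : ℕ} (μ : Fin s → ℕ) :
    Set (MatSpace n) :=
  zClosure {A | ∃ v : Fin s → (Fin n → ℂ),
    (∀ i, IsEigenvector (toMat A) (v i)) ∧ LinearIndependent ℂ v ∧ polarEval f μ v = 0}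

/-- The parts of a partition of `d`, listed as a tuple. -/
def partTuple (d : ℕ) (μ : Nat.Partition d) : Fin (Multiset.card μ.parts) → ℕ :=
  fun i => μ.parts.toList.get (i.cast (Multiset.length_toList _).symm)

/-- The multiset of nonzero exponents of the monomial indexed by `σ`. -/
def expMultiset {n d : ℕ} (σ : Sym (Fin n) d) : Multiset ℕ :=
  Multiset.filter (fun e => e ≠ 0)
    (Multiset.map (fun i => Multiset.toFinsupp (σ : Multiset (Fin n)) i) Finset.univ.val)

/-! ## Tangent spaces, smooth points and singular loci -/

/-- The Zariski tangent space of `X ⊆ ℂ^ι` at `x`: the common kernel of the differentials at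
`x` of all polynomials vanishing on `X`. -/
def tangentSpace {ι : Type*} [Fintype ι] (X : Set (ι → ℂ)) (x : ι → ℂ) :
    Submodule ℂ (ι → ℂ) where
  carrier := {u | ∀ p : MvPolynomial ι ℂ, (∀ y ∈ X, MvPolynomial.eval y p = 0) →
      ∑ i : ι, u i * MvPolynomial.eval x (MvPolynomial.pderiv i p) = 0}
  add_mem' := by
    intro a b ha hb p hp
    have h1 := ha p hp
    have h2 := hb p hp
    simp only [Pi.add_apply, add_mul, Finset.sum_add_distrib, h1, h2, add_zero]
  zero_mem' := by
    intro p hp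
    simp
  smul_mem' := by
    intro c u hu p hp
    have h1 := hu p hp
    simp only [Pi.smul_apply, smul_eq_mul, mul_assoc, ← Finset.mul_sum, h1, mul_zero]

/-- The local dimension of `X` at `x`, in the Zariski topology. -/
def zLocalDim {ι : Type*} (X : Set (ι → ℂ)) (x : ι → ℂ) : WithBot ℕ∞ :=
  ⨅ (U : Set (ι → ℂ)) (_ : zOpen U) (_ : x ∈ U), zDim (X ∩ U)

/-- `x` is a smooth point of `X`: the Zariski tangent space has dimension equal to the local
dimension of `X` at `x`. -/
def smoothAt {ι : Type*} [Fintype ι] (X : Set (ι → ℂ)) (x : ι → ℂ) : Prop :=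
  ((Module.finrank ℂ (tangentSpace X x) : ℕ∞) : WithBot ℕ∞) = zLocalDim X x

/-- The affine cone over the singular locus of the projective variety whose affine cone is `X`:
the nonzero points of `X` that are not smooth points. -/
def projSingCone {ι : Type*} [Fintype ι] (X : Set (ι → ℂ)) : Set (ι → ℂ) :=
  {x | x ∈ X ∧ x ≠ 0 ∧ ¬ smoothAt X x}

/-- The affine cone over the (reduced) singular locus of the Kalman variety of the projective
variety with affine cone `X`. -/
def singKalmanCone {n : ℕ} (X : Set (Fin n → ℂ)) : Set (MatSpace n) :=
  zClosure (projSingCone (zClosure (kalmanCone X)))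



/-! ## The spaces `ℙ_s = ℙ^{n²-1} × (ℙ^{n-1})^s` (as multicones) -/

/-- Coordinates for the multicone over `ℙ^{n²-1} × (ℙ^{n-1})^{×s}`. -/
abbrev MIdx (n s : ℕ) := (Fin n × Fin n) ⊕ (Fin s × Fin n)

/-- The matrix component of a point of the multicone. -/
def matPart {n s : ℕ} (x : MIdx n s → ℂ) : MatSpace n := fun ij => x (Sum.inl ij)

/-- The `i`-th vector component of a point of the multicone. -/
def vecPart {n s : ℕ} (x : MIdx n s → ℂ) (i : Fin s) : Fin n → ℂ := fun k => x (Sum.inr (i, k))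

/-- A partition of `{1, …, s}` into `k` (indexed) nonempty pairwise disjoint blocks. -/
structure IdxPartition (s k : ℕ) where
  block : Fin k → Finset (Fin s)
  nonempty : ∀ i, (block i).Nonempty
  disj : ∀ i j, i ≠ j → Disjoint (block i) (block j)
  cover : ∀ p : Fin s, ∃ i, p ∈ block i

/-- The minimal representative of the `i`-th block. -/
def IdxPartition.rep {s k : ℕ} (P : IdxPartition s k) (i : Fin k) : Fin s :=
  (P.block i).min' (P.nonempty i)

/-- The finest partition, all of whose blocks are singletons. -/
def singletonPartition (s : ℕ) : IdxPartition s s where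
  block i := {i}
  nonempty i := ⟨i, by simp⟩
  disj i j h := Finset.disjoint_singleton.2 h
  cover p := ⟨p, by simp⟩

/-- A tuple of nonzero vectors is `P`-compatible: vectors within each block of `P` are
proportional, and representatives of the distinct blocks are linearly independent. -/
def PCompatible {n s k : ℕ} (P : IdxPartition s k) (v : Fin s → Fin n → ℂ) : Prop :=
  (∀ p, v p ≠ 0) ∧
  (∀ i, ∀ p ∈ P.block i, ∀ q ∈ P.block i, ∃ c : ℂ, v p = c • v q) ∧
  (∀ r : Fin k → Fin s, (∀ i, r i ∈ P.block i) → LinearIndependent ℂ (fun i => v (r i)))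

/-- The multicone over `W_s`: tuples `(A, v_1, …, v_s)` where each `v_i` is an eigenvector of
the (nonzero) matrix `A`. -/
def Wcone (n s : ℕ) : Set (MIdx n s → ℂ) :=
  {x | matPart x ≠ 0 ∧ ∀ i, IsEigenvector (toMat (matPart x)) (vecPart x i)}

/-- The multicone over `W_{s,P}`: the Zariski closure of the set of tuples in `W_s` whose
vector part is `P`-compatible. -/
def WsPcone (n : ℕ) {s k : ℕ} (P : IdxPartition s k) : Set (MIdx n s → ℂ) :=
  zClosure {x | x ∈ Wcone n s ∧ PCompatible P (fun i => vecPart x i)}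

/-! ## Multidegrees -/

/-- Parameter space for a multiprojective slice of multidegree type `γ`. -/
abbrev MSliceParam (n s : ℕ) (γ : Fin (s + 1) → ℕ) : Type :=
  (Fin (n ^ 2 - γ 0) × Option (Fin n × Fin n)) ⊕ ((Σ j : Fin s, Fin (n - γ j.succ)) × Option (Fin n))

/-- The multiprojective affine-linear slice with parameters `a`: it cuts the matrix factor by
`n² - γ 0` affine-linear equations and the `j`-th vector factor by `n - γ (j+1)` affine-linear
equations. -/
def mSlice {n s : ℕ} (γ : Fin (s + 1) → ℕ) (a : MSliceParam n s γ → ℂ) :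
    Set (MIdx n s → ℂ) :=
  {x | (∀ r : Fin (n ^ 2 - γ 0),
          a (Sum.inl (r, none)) +
            ∑ ij : Fin n × Fin n, a (Sum.inl (r, some ij)) * x (Sum.inl ij) = 0) ∧
       (∀ j : Fin s, ∀ r : Fin (n - γ j.succ),
          a (Sum.inr (⟨j, r⟩, none)) +
            ∑ k : Fin n, a (Sum.inr (⟨j, r⟩, some k)) * x (Sum.inr (j, k)) = 0)}

/-- `hasMD W γ δ` : the coefficient of the monomial `h_0^{γ 0} h_1^{γ 1} ⋯ h_s^{γ s}` in the
Chow class of the multiprojective variety with multicone `W ⊆ ℂ^{n²} × (ℂ^n)^s` equals `δ`: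
a generic multiprojective slice of type `γ` meets `W` in exactly `δ` points. -/
def hasMD {n s : ℕ} (W : Set (MIdx n s → ℂ)) (γ : Fin (s + 1) → ℕ) (δ : ℕ) : Prop :=
  ∃ U : Set (MSliceParam n s γ → ℂ), zOpen U ∧ zDense U ∧
    ∀ a ∈ U, (W ∩ mSlice γ a).ncard = δ

/-- The exponent vector of the monomial `h_0 · h_1^{n-1} ⋯ h_i^{n-2} ⋯ h_s^{n-1}`. -/
def specialExp (n s : ℕ) (i : Fin s) : Fin (s + 1) → ℕ :=
  fun j => if j = 0 then 1 else if j = i.succ then n - 2 else n - 1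

/-- `γ` lies in the box of admissible exponents of the Chow ring of `ℙ^{n²-1} × (ℙ^{n-1})^s`. -/
def inBox (n s : ℕ) (γ : Fin (s + 1) → ℕ) : Prop :=
  γ 0 < n ^ 2 ∧ ∀ j : Fin s, γ j.succ < n

/-- `representsClass W c q` : the polynomial `q` represents the Chow class of the
multiprojective variety with multicone `W`, of codimension `c`: its coefficients in the
admissible box in degree `c` are the multidegrees of `W`, and all other coefficients vanish. -/
def representsClass {n s : ℕ} (W : Set (MIdx n s → ℂ)) (c : ℕ)
    (q : MvPolynomial (Fin (s + 1)) ℤ) : Prop :=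
  (∀ γ : Fin (s + 1) → ℕ, inBox n s γ → (∑ j, γ j) = c →
      ∃ δ : ℕ, q.coeff (Finsupp.equivFunOnFinite.symm γ) = (δ : ℤ) ∧ hasMD W γ δ) ∧
  (∀ γ : Fin (s + 1) → ℕ, ¬ (inBox n s γ ∧ (∑ j, γ j) = c) →
      q.coeff (Finsupp.equivFunOnFinite.symm γ) = 0)

/-! ## The Chow ring of `ℙ^{n²-1} × (ℙ^{n-1})^s` -/

/-- The defining ideal of the Chow ring `ℤ[h_0, …, h_s]/(h_0^{n²}, h_1^n, …, h_s^n)`. -/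
def chowIdeal (n s : ℕ) : Ideal (MvPolynomial (Fin (s + 1)) ℤ) :=
  Ideal.span ({MvPolynomial.X 0 ^ n ^ 2} ∪
    Set.range fun j : Fin s => MvPolynomial.X j.succ ^ n)

/-- The Chow ring `A^*(ℙ_s) = ℤ[h_0, …, h_s]/(h_0^{n²}, h_1^n, …, h_s^n)`. -/
abbrev ChowRing (n s : ℕ) := MvPolynomial (Fin (s + 1)) ℤ ⧸ chowIdeal n s

/-- The variable substitution `h_0 ↦ t_0`, `h_i ↦ t_{q_i}` underlying `φ_P`. -/
def blockVarMap {s k : ℕ} (P : IdxPartition s k) : Fin (k + 1) → Fin (s + 1) :=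
  Fin.cases 0 fun i => (P.rep i).succ

lemma phiP_aux {n s k : ℕ} (P : IdxPartition s k) :
    ∀ a ∈ chowIdeal n k,
      ((Ideal.Quotient.mk (chowIdeal n s)).comp
        (MvPolynomial.rename (R := ℤ) (blockVarMap P)).toRingHom) a = 0 := by
  intro a ha
  rw [RingHom.comp_apply, Ideal.Quotient.eq_zero_iff_mem]
  have hmap : (MvPolynomial.rename (R := ℤ) (blockVarMap P)).toRingHom a ∈
      Ideal.map (MvPolynomial.rename (R := ℤ) (blockVarMap P)).toRingHom
        (chowIdeal n k) :=
    Ideal.mem_map_of_mem _ ha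
  have hle : Ideal.map
      (MvPolynomial.rename (R := ℤ) (blockVarMap P)).toRingHom
      (chowIdeal n k) ≤ chowIdeal n s := by
    rw [chowIdeal, Ideal.map_span, Ideal.span_le]
    rintro q ⟨p, hp, rfl⟩
    rcases hp with hp | ⟨j, rfl⟩
    · rw [Set.mem_singleton_iff] at hp
      subst hp
      simp only [AlgHom.toRingHom_eq_coe, RingHom.coe_coe, map_pow, MvPolynomial.rename_X,
        Fin.cases_zero]
      exact Ideal.subset_span (Or.inl rfl)
    · simp only [AlgHom.toRingHom_eq_coe, RingHom.coe_coe, map_pow, MvPolynomial.rename_X,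
        Fin.cases_succ]
      exact Ideal.subset_span (Or.inr ⟨P.rep j, rfl⟩)
  exact hle hmap

/-- The ring map `φ_P : A^*(ℙ_k) → A^*(ℙ_s)` sending `h_0 ↦ t_0` and `h_i ↦ t_{q_i}`. -/
def phiP (n : ℕ) {s k : ℕ} (P : IdxPartition s k) : ChowRing n k →+* ChowRing n s :=
  Ideal.Quotient.lift (chowIdeal n k)
    ((Ideal.Quotient.mk (chowIdeal n s)).comp
      (MvPolynomial.rename (R := ℤ) (blockVarMap P)).toRingHom)
    (phiP_aux P)



/-! ## Discriminants of characteristic polynomials -/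

/-- `∏_{i<j} (l i - l j)^2` for a list `l`. -/
def listPairProdSq (l : List ℂ) : ℂ :=
  ∏ p ∈ Finset.univ.filter (fun p : Fin l.length × Fin l.length => p.1 < p.2),
    (l.get p.1 - l.get p.2) ^ 2

/-- The product of the squared differences of all pairs of elements of a multiset; applied to
the multiset of roots of a characteristic polynomial this is the discriminant. -/
def pairProdSq (m : Multiset ℂ) : ℂ := listPairProdSq m.toList

/-- The coordinate vector (for the action of the symmetric power `ρ_d`) of the symmetric
product `v_1 ⋯ v_d` of the vectors `v i`: its `σ`-th coordinate is the coefficient of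
`t_1 ⋯ t_d` in `∏_k (∑_i t_i v i k)^{σ_k}`. -/
def symProdVec {n d : ℕ} (v : Fin d → Fin n → ℂ) : MonIdx n d → ℂ := fun σ =>
  MvPolynomial.coeff (Finsupp.equivFunOnFinite.symm fun _ : Fin d => 1)
    (∏ k : Fin n, (∑ i : Fin d, MvPolynomial.C (v i k) * MvPolynomial.X i) ^ (monExp σ k))

section
open Matrix

theorem kd_charpoly_conj {ι : Type*} [Fintype ι] [DecidableEq ι] (M P Q : Matrix ι ι ℂ)
    (hQP : Q * P = 1) : (P * M * Q).charpoly = M.charpoly := by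
  rw [Matrix.mul_assoc, Matrix.charpoly_mul_comm, Matrix.mul_assoc, hQP, Matrix.mul_one]

theorem kd_nodup_diag {ι : Type*} [Fintype ι] [DecidableEq ι] (D : ι → ℂ) :
    (diagonal D).charpoly.roots.Nodup ↔ Function.Injective D := by
  rw [Matrix.charpoly_diagonal]
  have h : (∏ i, (Polynomial.X - Polynomial.C (D i))).roots = (Finset.univ.val.map D) := by
    have := Polynomial.roots_multiset_prod_X_sub_C (Finset.univ.val.map D)
    rw [Multiset.map_map] at this
    exact this
  rw [h]
  constructor
  · intro h a b hab
    exact Multiset.inj_on_of_nodup_map h a (Finset.mem_univ a) b (Finset.mem_univ b) hab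
  · intro h
    exact Multiset.Nodup.map h Finset.univ.nodup

theorem kd_diag_of_nodup {ι : Type*} [Fintype ι] [DecidableEq ι] (M : Matrix ι ι ℂ)
    (h : M.charpoly.roots.Nodup) : ∃ (P Q : Matrix ι ι ℂ) (D : ι → ℂ), P * Q = 1 ∧ Q * P = 1 ∧
      Function.Injective D ∧ M = P * diagonal D * Q := by
  classical
  have hcard : M.charpoly.roots.toFinset.card = Fintype.card ι := by
    rw [Multiset.toFinset_card_of_nodup h, ← M.charpoly_natDegree_eq_dim]
    exact (IsAlgClosed.splits M.charpoly).natDegree_eq_card_roots.symm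
  have hc : Fintype.card ι = Fintype.card M.charpoly.roots.toFinset := by
    rw [Fintype.card_coe, hcard]
  let e : ι ≃ M.charpoly.roots.toFinset := Fintype.equivOfCardEq hc
  let D : ι → ℂ := fun i => (e i : ℂ)
  have hD : Function.Injective D := Subtype.val_injective.comp e.injective
  have hev : ∀ i, ∃ v, Module.End.HasEigenvector (Matrix.toLin' M) (D i) v := by
    intro i
    have : Module.End.HasEigenvalue (Matrix.toLin' M) (D i) := by
      rw [Module.End.hasEigenvalue_iff_isRoot_charpoly, Matrix.charpoly_toLin']
      have := (e i).2
      rw [Multiset.mem_toFinset] at this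
      exact Polynomial.isRoot_of_mem_roots this
    exact this.exists_hasEigenvector
  choose v hv using hev
  have hli := Module.End.eigenvectors_linearIndependent' _ D hD v hv
  let P : Matrix ι ι ℂ := Matrix.of fun a i => v i a
  have hP : IsUnit P := by
    rw [← Matrix.linearIndependent_cols_iff_isUnit]
    exact hli
  have hPd := (Matrix.isUnit_iff_isUnit_det _).1 hP
  refine ⟨P, P⁻¹, D, Matrix.mul_nonsing_inv _ hPd, Matrix.nonsing_inv_mul _ hPd, hD, ?_⟩
  have : M * P = P * diagonal D := by
    ext a i
    have h1 := congrFun (hv i).apply_eq_smul a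
    simp only [Matrix.toLin'_apply, Pi.smul_apply, smul_eq_mul] at h1
    rw [Matrix.mul_diagonal, mul_comm]
    exact h1
  rw [← this, Matrix.mul_assoc, Matrix.mul_nonsing_inv _ hPd, Matrix.mul_one]

theorem kd_list (l : List ℂ) : listPairProdSq l = 0 ↔ ¬ l.Nodup := by
  unfold listPairProdSq
  rw [Finset.prod_eq_zero_iff, List.nodup_iff_injective_get]
  constructor
  · rintro ⟨p, hp, h⟩ hinj
    simp only [Finset.mem_filter] at hp
    have : l.get p.1 = l.get p.2 := sub_eq_zero.1 (pow_eq_zero_iff (two_ne_zero) |>.1 h)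
    exact hp.2.ne (hinj this)
  · intro h
    simp only [Function.Injective, not_forall] at h
    obtain ⟨a, b, hab, hne⟩ := h
    rcases lt_or_gt_of_ne hne with h | h
    · exact ⟨(a, b), by simpa using h, by rw [hab]; simp⟩
    · exact ⟨(b, a), by simpa using h, by rw [hab]; simp⟩

theorem kd_pair (m : Multiset ℂ) : pairProdSq m = 0 ↔ ¬ m.Nodup := by
  unfold pairProdSq
  rw [kd_list, ← Multiset.coe_nodup, Multiset.coe_toList]

/-- numeric Kalman matrix -/
def kalN {ι : Type*} [Fintype ι] [DecidableEq ι] (M : Matrix ι ι ℂ) (c : ι → ℂ) : Matrix ι ι ℂ :=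
  Matrix.of fun σ τ => (c ᵥ* (M ^ ((Fintype.equivFin ι) σ : ℕ))) τ

theorem kd_conj_pow {ι : Type*} [Fintype ι] [DecidableEq ι] (M P Q : Matrix ι ι ℂ)
    (hPQ : P * Q = 1) (hQP : Q * P = 1) (k : ℕ) : (P * M * Q) ^ k = P * M ^ k * Q := by
  induction k with
  | zero => simp [hPQ]
  | succ k ih =>
    rw [pow_succ, ih, pow_succ]
    calc P * M ^ k * Q * (P * M * Q) = P * M ^ k * (Q * P) * M * Q := by
          simp only [Matrix.mul_assoc]
      _ = _ := by rw [hQP]; simp only [Matrix.mul_assoc, Matrix.one_mul]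

theorem kd_kalN_conj {ι : Type*} [Fintype ι] [DecidableEq ι] (M P Q : Matrix ι ι ℂ)
    (hPQ : P * Q = 1) (hQP : Q * P = 1) (c : ι → ℂ) :
    kalN (P * M * Q) c = kalN M (c ᵥ* P) * Q := by
  ext σ τ
  simp only [kalN, Matrix.of_apply, kd_conj_pow M P Q hPQ hQP]
  rw [← Matrix.vecMul_vecMul, ← Matrix.vecMul_vecMul]
  rfl

theorem kd_kalN_diag {ι : Type*} [Fintype ι] [DecidableEq ι] (D : ι → ℂ) (c : ι → ℂ) :
    (kalN (diagonal D) c).det = (vandermonde (D ∘ (Fintype.equivFin ι).symm)).det * ∏ i, c i := by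
  have : kalN (diagonal D) c =
      ((vandermonde (D ∘ (Fintype.equivFin ι).symm))ᵀ).submatrix (Fintype.equivFin ι)
        (Fintype.equivFin ι) * diagonal c := by
    ext σ τ
    simp [kalN, Matrix.diagonal_pow, Matrix.vecMul_diagonal, Matrix.mul_diagonal, vandermonde,
      mul_comm]
  rw [this, Matrix.det_mul, Matrix.det_submatrix_equiv_self, Matrix.det_transpose, det_diagonal]

theorem kd_kalN_diag_zero {ι : Type*} [Fintype ι] [DecidableEq ι] (D : ι → ℂ) (c : ι → ℂ)
    (h : ¬ Function.Injective D) : (kalN (diagonal D) c).det = 0 := by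
  rw [kd_kalN_diag, mul_eq_zero]
  left
  by_contra hne
  rw [← ne_eq, Matrix.det_vandermonde_ne_zero_iff] at hne
  apply h
  have := hne.comp (Fintype.equivFin ι).injective
  simpa [Function.comp_assoc] using this

theorem kd_exists_cyclic {ι : Type*} [Fintype ι] [DecidableEq ι] (M : Matrix ι ι ℂ)
    (h : M.charpoly.roots.Nodup) : ∃ c, (kalN M c).det ≠ 0 := by
  obtain ⟨P, Q, D, hPQ, hQP, hD, rfl⟩ := kd_diag_of_nodup M h
  refine ⟨(fun _ => 1) ᵥ* Q, ?_⟩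
  rw [kd_kalN_conj _ _ _ hPQ hQP, Matrix.vecMul_vecMul, hQP, Matrix.vecMul_one, Matrix.det_mul,
    kd_kalN_diag]
  have hQ : Q.det ≠ 0 := by
    intro h0
    have := congrArg Matrix.det hPQ
    rw [Matrix.det_mul, h0] at this
    simp at this
  refine mul_ne_zero (mul_ne_zero ?_ (by simp)) hQ
  rw [Matrix.det_vandermonde_ne_zero_iff]
  exact hD.comp (Fintype.equivFin ι).symm.injective

theorem kd_shape {ι : Type*} [Fintype ι] [DecidableEq ι] (M : Matrix ι ι ℂ) (i j : ι) (hij : i ≠ j)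
    (l a : ℂ) (hi : Pi.single i 1 ᵥ* M = l • Pi.single i 1)
    (hj : Pi.single j 1 ᵥ* M = l • Pi.single j 1 + a • Pi.single i 1) :
    ¬ M.charpoly.roots.Nodup := by
  intro h
  obtain ⟨P, Q, D, hPQ, hQP, hD, rfl⟩ := kd_diag_of_nodup M h
  set u := Pi.single i 1 ᵥ* P with hu
  set v := Pi.single j 1 ᵥ* P with hv
  have key : ∀ w : ι → ℂ, (w ᵥ* (P * diagonal D * Q)) ᵥ* P = (w ᵥ* P) ᵥ* diagonal D := by
    intro w
    rw [Matrix.vecMul_vecMul, Matrix.vecMul_vecMul, Matrix.mul_assoc, hQP, Matrix.mul_one]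
  have h1 : u ᵥ* diagonal D = l • u := by
    rw [hu, ← key, hi, Matrix.smul_vecMul]
  have h2 : v ᵥ* diagonal D = l • v + a • u := by
    rw [hv, ← key, hj, Matrix.add_vecMul, Matrix.smul_vecMul, Matrix.smul_vecMul]
  have h1' : ∀ k, u k * (D k - l) = 0 := by
    intro k
    have := congrFun h1 k
    simp only [Matrix.vecMul_diagonal, Pi.smul_apply, smul_eq_mul] at this
    linear_combination this
  have h2' : ∀ k, v k * (D k - l) ^ 2 = 0 := by
    intro k
    have := congrFun h2 k
    simp only [Matrix.vecMul_diagonal, Pi.smul_apply, smul_eq_mul, Pi.add_apply] at this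
    linear_combination (D k - l) * this + a * h1' k
  have hinj : ∀ w : ι → ℂ, w ᵥ* P = 0 → w = 0 := by
    intro w hw
    have : (w ᵥ* P) ᵥ* Q = w := by rw [Matrix.vecMul_vecMul, hPQ, Matrix.vecMul_one]
    rw [← this, hw, Matrix.zero_vecMul]
  have hu0 : u ≠ 0 := by
    intro h0
    have := congrFun (hinj _ h0) i
    simp at this
  obtain ⟨k, hk⟩ := Function.ne_iff.1 hu0
  simp only [Pi.zero_apply] at hk
  have hDk : D k = l := by
    rcases mul_eq_zero.1 (h1' k) with h | h
    · exact absurd h hk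
    · exact sub_eq_zero.1 h
  have hoff : ∀ m, m ≠ k → u m = 0 ∧ v m = 0 := by
    intro m hm
    have : D m - l ≠ 0 := by
      intro h0
      exact hm (hD ((sub_eq_zero.1 h0).trans hDk.symm))
    exact ⟨(mul_eq_zero.1 (h1' m)).resolve_right this,
      (mul_eq_zero.1 (h2' m)).resolve_right (pow_ne_zero _ this)⟩
  have hz : (v k • (Pi.single i 1 : ι → ℂ) - u k • Pi.single j 1) ᵥ* P = 0 := by
    rw [Matrix.sub_vecMul, Matrix.smul_vecMul, Matrix.smul_vecMul, ← hu, ← hv]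
    ext m
    by_cases hm : m = k
    · subst hm; simp [mul_comm]
    · simp [hoff m hm]
  have := congrFun (hinj _ hz) j
  simp [hij.symm, hk] at this


theorem kd_two_vec {V : Type*} [AddCommGroup V] [Module ℂ V] [FiniteDimensional ℂ V]
    (f : Module.End ℂ V) (l : ℂ) (h : 2 ≤ Module.finrank ℂ (f.maxGenEigenspace l)) :
    ∃ (v w : V) (a : ℂ), LinearIndependent ℂ ![v, w] ∧ f v = l • v ∧ f w = l • w + a • v := by
  set g := f - algebraMap ℂ (Module.End ℂ V) l with hg
  have hgf : ∀ x, f x = l • x + g x := by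
    intro x; simp [hg]
  set K := LinearMap.ker g with hK
  have memK : ∀ x, x ∈ K ↔ g x = 0 := fun x => LinearMap.mem_ker
  by_cases hdim : 2 ≤ Module.finrank ℂ K
  · obtain ⟨s, hs⟩ := exists_linearIndependent_of_le_finrank hdim
    have hs' : LinearIndependent ℂ ![(s 0 : V), (s 1 : V)] := by
      have := hs.map' K.subtype (Submodule.ker_subtype K)
      convert! this using 1
      ext i; fin_cases i <;> rfl
    refine ⟨s 0, s 1, 0, hs', ?_, ?_⟩
    · rw [hgf, (memK _).1 (s 0).2, add_zero]
    · rw [hgf, (memK _).1 (s 1).2, zero_smul]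
  · -- there is `x` in the generalized eigenspace outside `K`
    have hne : ∃ x ∈ f.maxGenEigenspace l, x ∉ K := by
      by_contra hcon
      push Not at hcon
      have : f.maxGenEigenspace l ≤ K := hcon
      exact hdim (h.trans (Submodule.finrank_mono this))
    obtain ⟨x, hx, hxK⟩ := hne
    obtain ⟨k, hk⟩ := (Module.End.mem_maxGenEigenspace f l x).1 hx
    have hk' : (g ^ k) x = 0 := hk
    have hex : ∃ k, (g ^ k) x = 0 := ⟨k, hk'⟩
    classical
    have hmin := Nat.find_spec hex
    set r := Nat.find hex with hr
    have hr2 : 2 ≤ r := by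
      by_contra hlt
      have : r = 0 ∨ r = 1 := by omega
      rcases this with h0 | h0
      · rw [h0] at hmin
        apply hxK
        have : x = 0 := by simpa using hmin
        rw [this]; exact K.zero_mem
      · rw [h0] at hmin
        apply hxK
        rw [memK]; simpa using hmin
    obtain ⟨t, ht⟩ : ∃ t, r = t + 2 := ⟨r - 2, by omega⟩
    have hw : g ((g ^ t) x) ≠ 0 := by
      have := Nat.find_min hex (m := t + 1) (by omega)
      rwa [pow_succ'] at this
    have hv : g (g ((g ^ t) x)) = 0 := by
      have := hmin
      rw [ht, pow_succ', pow_succ'] at this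
      exact this
    refine ⟨g ((g ^ t) x), (g ^ t) x, 1, ?_, ?_, ?_⟩
    · rw [LinearIndependent.pair_iff]
      intro a b hab
      have h1 := congrArg g hab
      rw [map_add, map_smul, map_smul, hv, smul_zero, zero_add, map_zero] at h1
      have hb : b = 0 := (smul_eq_zero.1 h1).resolve_right hw
      rw [hb, zero_smul, add_zero] at hab
      exact ⟨(smul_eq_zero.1 hab).resolve_right hw, hb⟩
    · rw [hgf, hv, add_zero]
    · rw [hgf, one_smul]

theorem kd_extend {V : Type*} [AddCommGroup V] [Module ℂ V] [FiniteDimensional ℂ V]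
    (v w : V) (h : LinearIndependent ℂ ![v, w]) (m : ℕ) (hm : m + 2 ≤ Module.finrank ℂ V) :
    ∃ s : Fin (m + 2) → V, LinearIndependent ℂ s ∧ s 0 = v ∧ s 1 = w := by
  induction m with
  | zero => exact ⟨_, h, rfl, rfl⟩
  | succ m ih =>
    obtain ⟨s, hs, h0, h1⟩ := ih (by omega)
    obtain ⟨x, hx⟩ := exists_linearIndependent_snoc_of_lt_finrank hs (by omega)
    refine ⟨Fin.snoc s x, hx, ?_, ?_⟩
    · rw [← h0]
      exact Fin.snoc_castSucc (α := fun _ => V) x s 0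
    · rw [← h1]
      exact Fin.snoc_castSucc (α := fun _ => V) x s 1

theorem kd_exists_shape {m : ℕ} (A : Matrix (Fin (m + 2)) (Fin (m + 2)) ℂ)
    (h : ¬ A.charpoly.roots.Nodup) : ∃ (H G T : Matrix (Fin (m + 2)) (Fin (m + 2)) ℂ) (l a : ℂ),
      H * G = 1 ∧ G * H = 1 ∧ A = G * T * H ∧
      Pi.single 0 1 ᵥ* T = l • Pi.single 0 1 ∧
      Pi.single 1 1 ᵥ* T = l • Pi.single 1 1 + a • Pi.single 0 1 := by
  classical
  have hl : ∃ l, 2 ≤ A.charpoly.roots.count l := by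
    rw [Multiset.nodup_iff_count_le_one] at h
    push Not at h
    exact h
  obtain ⟨l, hl⟩ := hl
  rw [Polynomial.count_roots] at hl
  have hf : 2 ≤ Module.finrank ℂ (Module.End.maxGenEigenspace (Matrix.toLin' Aᵀ) l) := by
    rw [LinearMap.finrank_maxGenEigenspace_eq, Matrix.charpoly_toLin', Matrix.charpoly_transpose]
    exact hl
  obtain ⟨v, w, a, hli, hv, hw⟩ := kd_two_vec _ l hf
  obtain ⟨s, hs, h0, h1⟩ := kd_extend v w hli m (by simp)
  rw [Matrix.toLin'_apply, Matrix.mulVec_transpose] at hv hw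
  let H : Matrix (Fin (m + 2)) (Fin (m + 2)) ℂ := Matrix.of s
  have hH : IsUnit H := by
    rw [← Matrix.linearIndependent_rows_iff_isUnit]
    exact hs
  have hHd := (Matrix.isUnit_iff_isUnit_det _).1 hH
  have e1 : H * H⁻¹ = 1 := Matrix.mul_nonsing_inv _ hHd
  have e2 : H⁻¹ * H = 1 := Matrix.nonsing_inv_mul _ hHd
  have r0 : Pi.single 0 1 ᵥ* H = v := by
    rw [Matrix.single_one_vecMul]; exact h0
  have r1 : Pi.single 1 1 ᵥ* H = w := by
    rw [Matrix.single_one_vecMul]; exact h1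
  have b0 : v ᵥ* H⁻¹ = Pi.single 0 1 := by
    rw [← r0, Matrix.vecMul_vecMul, e1, Matrix.vecMul_one]
  have b1 : w ᵥ* H⁻¹ = Pi.single 1 1 := by
    rw [← r1, Matrix.vecMul_vecMul, e1, Matrix.vecMul_one]
  refine ⟨H, H⁻¹, H * A * H⁻¹, l, a, e1, e2, ?_, ?_, ?_⟩
  · calc A = (H⁻¹ * H) * A * (H⁻¹ * H) := by rw [e2]; simp
      _ = _ := by simp only [Matrix.mul_assoc]
  · rw [← Matrix.vecMul_vecMul, ← Matrix.vecMul_vecMul, r0, hv, Matrix.smul_vecMul, b0]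
  · rw [← Matrix.vecMul_vecMul, ← Matrix.vecMul_vecMul, r1, hw, Matrix.add_vecMul,
      Matrix.smul_vecMul, Matrix.smul_vecMul, b0, b1]


theorem kd_monExp_inj {n d : ℕ} : Function.Injective (monExp (n := n) (d := d)) := by
  intro a b h
  unfold monExp at h
  exact Sym.coe_injective (Multiset.toFinsupp.injective h)

theorem kd_monExp_degree {n d : ℕ} (σ : MonIdx n d) : (monExp σ).degree = d := by
  have h : Multiset.card (Finsupp.toMultiset (monExp σ)) = d := by
    unfold monExp
    rw [Multiset.toFinsupp_toMultiset]
    exact σ.2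
  rw [Finsupp.card_toMultiset] at h
  exact h

theorem kd_monExp_surj {n d : ℕ} (e : Fin n →₀ ℕ) (h : e.degree = d) :
    ∃ σ : MonIdx n d, monExp σ = e := by
  refine ⟨⟨Finsupp.toMultiset e, ?_⟩, ?_⟩
  · rw [Finsupp.card_toMultiset]; exact h
  · unfold monExp
    exact Finsupp.toMultiset_toFinsupp e

/-- substitution by a matrix -/
def kdSub {R : Type*} [CommRing R] {n : ℕ} (A : Matrix (Fin n) (Fin n) R) :
    MvPolynomial (Fin n) R →ₐ[R] MvPolynomial (Fin n) R :=
  MvPolynomial.aeval fun j => ∑ k : Fin n, MvPolynomial.C (A j k) * MvPolynomial.X k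

theorem kdSub_X {R : Type*} [CommRing R] {n : ℕ} (A : Matrix (Fin n) (Fin n) R) (j : Fin n) :
    kdSub A (MvPolynomial.X j) = ∑ k : Fin n, MvPolynomial.C (A j k) * MvPolynomial.X k := by
  simp [kdSub]

theorem kdSub_mono {R : Type*} [CommRing R] {n : ℕ} (A : Matrix (Fin n) (Fin n) R)
    (e : Fin n →₀ ℕ) :
    kdSub A (MvPolynomial.monomial e 1) =
      ∏ j : Fin n, (∑ k : Fin n, MvPolynomial.C (A j k) * MvPolynomial.X k) ^ (e j) := by
  rw [kdSub, MvPolynomial.aeval_monomial, map_one, one_mul, Finsupp.prod_fintype]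
  intro i; simp

theorem kd_symPow {R : Type*} [CommRing R] {n : ℕ} (d : ℕ) (A : Matrix (Fin n) (Fin n) R)
    (τ σ : MonIdx n d) : symPow d A τ σ =
      MvPolynomial.coeff (monExp σ) (kdSub A (MvPolynomial.monomial (monExp τ) 1)) := by
  rw [kdSub_mono]; rfl

theorem kdSub_homog {R : Type*} [CommRing R] {n d : ℕ} (A : Matrix (Fin n) (Fin n) R)
    (τ : MonIdx n d) : (kdSub A (MvPolynomial.monomial (monExp τ) 1)).IsHomogeneous d := by
  rw [kdSub_mono]
  have h := MvPolynomial.IsHomogeneous.prod (Finset.univ)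
    (fun j : Fin n => (∑ k : Fin n, MvPolynomial.C (A j k) * MvPolynomial.X k) ^ (monExp τ j))
    (fun j => monExp τ j) (by
      intro j _
      have h1 : (∑ k : Fin n, MvPolynomial.C (A j k) * MvPolynomial.X k).IsHomogeneous 1 := by
        apply MvPolynomial.IsHomogeneous.sum
        intro k _
        exact MvPolynomial.isHomogeneous_C_mul_X _ _
      simpa using h1.pow (monExp τ j))
  have h2 : ∑ j, monExp τ j = d := by
    rw [← Finsupp.degree_eq_sum]; exact kd_monExp_degree τ
  rwa [h2] at h

theorem kd_expand {R : Type*} [CommRing R] {n d : ℕ} (F : MvPolynomial (Fin n) R)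
    (hF : F.IsHomogeneous d) :
    F = ∑ σ : MonIdx n d, MvPolynomial.monomial (monExp σ) (MvPolynomial.coeff (monExp σ) F) := by
  ext e
  rw [MvPolynomial.coeff_sum]
  simp only [MvPolynomial.coeff_monomial]
  by_cases he : e.degree = d
  · obtain ⟨σ, rfl⟩ := kd_monExp_surj e he
    rw [Finset.sum_eq_single σ]
    · simp
    · intro b _ hb
      rw [if_neg]
      intro h; exact hb (kd_monExp_inj h)
    · simp
  · rw [hF.coeff_eq_zero he, Finset.sum_eq_zero]
    intro σ _
    rw [if_neg]
    rintro rfl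
    exact he (kd_monExp_degree σ)

theorem kdSub_mul {R : Type*} [CommRing R] {n : ℕ} (A B : Matrix (Fin n) (Fin n) R)
    (F : MvPolynomial (Fin n) R) : kdSub (A * B) F = kdSub B (kdSub A F) := by
  have : kdSub (A * B) = (kdSub B).comp (kdSub A) := by
    apply MvPolynomial.algHom_ext
    intro j
    rw [AlgHom.comp_apply, kdSub_X, kdSub_X, map_sum]
    simp only [map_mul, kdSub_X, Matrix.mul_apply, map_sum, Finset.sum_mul, Finset.mul_sum]
    rw [Finset.sum_comm]
    refine Finset.sum_congr rfl fun i _ => Finset.sum_congr rfl fun k _ => ?_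
    have : kdSub B (MvPolynomial.C (A j i)) = MvPolynomial.C (A j i) := by
      simp [kdSub]
    rw [this, mul_assoc]
  rw [this]; rfl

theorem kd_symPow_mul {R : Type*} [CommRing R] {n : ℕ} (d : ℕ) (A B : Matrix (Fin n) (Fin n) R) :
    symPow d (A * B) = symPow d A * symPow d B := by
  ext τ σ
  rw [Matrix.mul_apply, kd_symPow, kdSub_mul]
  conv_lhs => rw [kd_expand _ (kdSub_homog A τ)]
  rw [map_sum, MvPolynomial.coeff_sum]
  refine Finset.sum_congr rfl fun κ _ => ?_
  rw [kd_symPow, kd_symPow, ← MvPolynomial.coeff_C_mul]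
  congr 1
  conv_lhs => rw [← mul_one (MvPolynomial.coeff (monExp κ) _), ← MvPolynomial.C_mul_monomial,
    map_mul]
  congr 1
  simp [kdSub]

theorem kd_symPow_diag {R : Type*} [CommRing R] {n : ℕ} (d : ℕ) (D : Fin n → R) :
    symPow d (diagonal D) = diagonal fun σ : MonIdx n d => ∏ j, D j ^ (monExp σ j) := by
  ext τ σ
  rw [kd_symPow, kdSub_mono]
  have : ∀ j : Fin n, (∑ k : Fin n, MvPolynomial.C (diagonal D j k) * MvPolynomial.X k) =
      MvPolynomial.C (D j) * MvPolynomial.X j := by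
    intro j
    rw [Finset.sum_eq_single j]
    · simp
    · intro b _ hb; simp [Matrix.diagonal_apply_ne' _ hb]
    · simp
  simp only [this, mul_pow, Finset.prod_mul_distrib]
  have h2 : ∏ j, (MvPolynomial.X j : MvPolynomial (Fin n) R) ^ (monExp τ j) =
      MvPolynomial.monomial (monExp τ) 1 := by
    rw [MvPolynomial.monomial_eq, Finsupp.prod_fintype]
    · simp
    · simp
  rw [h2]
  simp only [← map_pow, ← map_prod]
  rw [MvPolynomial.coeff_C_mul, MvPolynomial.coeff_monomial, Matrix.diagonal_apply]
  by_cases h : τ = σ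
  · simp [h]
  · rw [if_neg h, if_neg, mul_zero]
    intro h'; exact h (kd_monExp_inj h')

theorem kd_symPow_one {R : Type*} [CommRing R] {n : ℕ} (d : ℕ) :
    symPow d (1 : Matrix (Fin n) (Fin n) R) = 1 := by
  rw [← Matrix.diagonal_one, kd_symPow_diag]
  simp

theorem kd_symPow_pow {R : Type*} [CommRing R] {n : ℕ} (d : ℕ) (A : Matrix (Fin n) (Fin n) R)
    (k : ℕ) : symPow d (A ^ k) = symPow d A ^ k := by
  induction k with
  | zero => simp [kd_symPow_one]
  | succ k ih => rw [pow_succ, kd_symPow_mul, ih, pow_succ]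

theorem kd_symPow_map {R S : Type*} [CommRing R] [CommRing S] (φ : R →+* S) {n : ℕ} (d : ℕ)
    (A : Matrix (Fin n) (Fin n) R) : (symPow d A).map φ = symPow d (A.map φ) := by
  ext τ σ
  simp only [symPow, Matrix.map_apply, Matrix.of_apply]
  rw [← MvPolynomial.coeff_map]
  simp [map_prod, map_sum]

theorem kd_eval_kalman {n : ℕ} (d : ℕ) (c : MonIdx n d → ℂ) (B : Matrix (Fin n) (Fin n) ℂ) :
    MvPolynomial.eval (fun ij => B ij.1 ij.2) (kalmanDet d c) = (kalN (symPow d B) c).det := by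
  unfold kalmanDet
  rw [RingHom.map_det]
  congr 1
  ext σ τ
  have h : (genMat n).map (MvPolynomial.eval (fun ij : Fin n × Fin n => B ij.1 ij.2)) = B := by
    ext i j; simp [genMat]
  have h2 := kd_symPow_map (MvPolynomial.eval (fun ij : Fin n × Fin n => B ij.1 ij.2)) d (genMat n)
  rw [h] at h2
  simp only [kalN, kalmanSq, RingHom.mapMatrix_apply, Matrix.map_apply, Matrix.of_apply, map_sum,
    map_mul, MvPolynomial.eval_C, Matrix.vecMul, dotProduct]
  refine Finset.sum_congr rfl fun κ _ => ?_
  congr 1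
  rw [← h2, ← RingHom.mapMatrix_apply, ← map_pow]
  rfl

theorem kd_symPow_shape {m k : ℕ} (T : Matrix (Fin (m + 2)) (Fin (m + 2)) ℂ) (l a : ℂ)
    (h0 : Pi.single 0 1 ᵥ* T = l • Pi.single 0 1)
    (h1 : Pi.single 1 1 ᵥ* T = l • Pi.single 1 1 + a • Pi.single 0 1) :
    ¬ (symPow (k + 1) T).charpoly.roots.Nodup := by
  rw [Matrix.single_one_vecMul] at h0 h1
  have s0 : kdSub T (MvPolynomial.X 0) = MvPolynomial.C l * MvPolynomial.X 0 := by
    rw [kdSub_X, Finset.sum_eq_single 0]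
    · have := congrFun h0 0
      simp at this; rw [this]
    · intro b _ hb
      have := congrFun h0 b
      simp [hb] at this; simp [this]
    · simp
  have s1 : kdSub T (MvPolynomial.X 1) =
      MvPolynomial.C l * MvPolynomial.X 1 + MvPolynomial.C a * MvPolynomial.X 0 := by
    rw [kdSub_X]
    have : ∀ j, T 1 j = l * (Pi.single 1 1 : Fin (m + 2) → ℂ) j
        + a * (Pi.single 0 1 : Fin (m + 2) → ℂ) j := fun j => congrFun h1 j
    simp only [this, map_add, map_mul, add_mul, Finset.sum_add_distrib]
    congr 1
    · rw [Finset.sum_eq_single 1]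
      · simp
      · intro b _ hb; simp [hb]
      · simp
    · rw [Finset.sum_eq_single 0]
      · simp
      · intro b _ hb; simp [hb]
      · simp
  obtain ⟨σ0, e0⟩ := kd_monExp_surj (n := m + 2) (d := k + 1) (Finsupp.single 0 (k + 1)) (by simp)
  obtain ⟨σ1, e1⟩ := kd_monExp_surj (n := m + 2) (d := k + 1)
    (Finsupp.single 0 k + Finsupp.single 1 1) (by simp [map_add])
  have hm0 : (MvPolynomial.monomial (monExp σ0) 1 : MvPolynomial (Fin (m + 2)) ℂ) =
      MvPolynomial.X 0 ^ (k + 1) := by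
    rw [e0, MvPolynomial.X_pow_eq_monomial]
  have hm1 : (MvPolynomial.monomial (monExp σ1) 1 : MvPolynomial (Fin (m + 2)) ℂ) =
      MvPolynomial.X 0 ^ k * MvPolynomial.X 1 := by
    rw [e1, MvPolynomial.X_pow_eq_monomial, MvPolynomial.X, MvPolynomial.monomial_mul, one_mul]
  have hcoef : ∀ τ σ : MonIdx (m + 2) (k + 1),
      MvPolynomial.coeff (monExp σ) (MvPolynomial.monomial (monExp τ) (1 : ℂ)) =
        (Pi.single τ 1 : MonIdx (m + 2) (k + 1) → ℂ) σ := by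
    intro τ σ
    rw [MvPolynomial.coeff_monomial, Pi.single_apply]
    by_cases h : τ = σ
    · simp [h]
    · rw [if_neg (fun h' => h (kd_monExp_inj h')), if_neg (Ne.symm h)]
  refine kd_shape _ σ0 σ1 ?_ (l ^ (k + 1)) (a * l ^ k) ?_ ?_
  · intro h
    have := congrArg (fun s => monExp s 1) h
    simp [e0, e1] at this
  · rw [Matrix.single_one_vecMul]
    ext σ
    show symPow (k + 1) T σ0 σ = _
    rw [kd_symPow, hm0, map_pow, s0, mul_pow, ← hm0, ← map_pow, MvPolynomial.coeff_C_mul, hcoef]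
    simp
  · rw [Matrix.single_one_vecMul]
    ext σ
    show symPow (k + 1) T σ1 σ = _
    rw [kd_symPow, hm1, map_mul, map_pow, s0, s1]
    have : ((MvPolynomial.C l * MvPolynomial.X 0) ^ k *
        (MvPolynomial.C l * MvPolynomial.X 1 + MvPolynomial.C a * MvPolynomial.X 0) :
        MvPolynomial (Fin (m + 2)) ℂ) =
        MvPolynomial.C (l ^ (k + 1)) * (MvPolynomial.X 0 ^ k * MvPolynomial.X 1) +
        MvPolynomial.C (a * l ^ k) * MvPolynomial.X 0 ^ (k + 1) := by
      simp only [map_mul, map_pow]; ring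
    rw [this, ← hm0, ← hm1, MvPolynomial.coeff_add, MvPolynomial.coeff_C_mul,
      MvPolynomial.coeff_C_mul, hcoef, hcoef]
    simp


theorem kd_null {ι : Type*} [Finite ι] (q p : MvPolynomial ι ℂ) (hq : Irreducible q)
    (h : ∀ x, MvPolynomial.eval x q = 0 → MvPolynomial.eval x p = 0) : q ∣ p := by
  have hprime : Prime q := hq.prime
  have hP : (Ideal.span {q}).IsPrime := (Ideal.span_singleton_prime hprime.ne_zero).2 hprime
  rw [← Ideal.mem_span_singleton, ← MvPolynomial.IsPrime.vanishingIdeal_zeroLocus (K := ℂ)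
    (Ideal.span {q})]
  rw [MvPolynomial.mem_vanishingIdeal_iff]
  intro x hx
  rw [MvPolynomial.mem_zeroLocus_iff] at hx
  have := hx q (Ideal.mem_span_singleton_self q)
  rw [MvPolynomial.aeval_eq_eval] at this ⊢
  exact h x this

theorem kd_basis (ι : Type*) : @TopologicalSpace.IsTopologicalBasis _ (zTop ι)
    {U | ∃ p : MvPolynomial ι ℂ, U = {x | MvPolynomial.eval x p ≠ 0}} := by
  let _ := zTop ι
  refine ⟨?_, ?_, rfl⟩
  · rintro _ ⟨p, rfl⟩ _ ⟨r, rfl⟩ x hx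
    refine ⟨_, ⟨p * r, rfl⟩, ?_, ?_⟩
    · simpa using hx
    · intro y hy
      simpa using hy
  · rw [Set.eq_univ_iff_forall]
    intro x
    exact ⟨_, ⟨1, rfl⟩, by simp⟩

theorem kd_open_dense {ι : Type*} (p : MvPolynomial ι ℂ) (hp : p ≠ 0) :
    zOpen {x | MvPolynomial.eval x p ≠ 0} ∧ zDense {x | MvPolynomial.eval x p ≠ 0} := by
  constructor
  · exact TopologicalSpace.isOpen_generateFrom_of_mem ⟨p, rfl⟩
  · unfold zDense
    let _ := zTop ι
    rw [(kd_basis ι).dense_iff]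
    rintro _ ⟨r, rfl⟩ ⟨x, hx⟩
    have hr : r ≠ 0 := by
      rintro rfl; simp at hx
    have hpr : p * r ≠ 0 := mul_ne_zero hp hr
    have : ∃ y, MvPolynomial.eval y (p * r) ≠ 0 := by
      by_contra hcon
      push Not at hcon
      exact hpr (MvPolynomial.funext fun y => by simpa using hcon y)
    obtain ⟨y, hy⟩ := this
    rw [map_mul, mul_ne_zero_iff] at hy
    exact ⟨y, hy.2, hy.1⟩

theorem kd_dense_nonempty {ι : Type*} (U : Set (ι → ℂ)) (h : zDense U) : U.Nonempty := by
  let _ := zTop ι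
  exact Dense.nonempty h

/-- projection to the matrices of the required shape -/
def kdL {R : Type*} [CommRing R] {m : ℕ} (M : Matrix (Fin (m + 2)) (Fin (m + 2)) R) :
    Matrix (Fin (m + 2)) (Fin (m + 2)) R :=
  Matrix.of fun i j => if i = 0 then (if j = 0 then M 0 0 else 0) else
    if i = 1 then (if j = 0 then M 1 0 else if j = 1 then M 0 0 else 0) else M i j

theorem kdL_row0 {m : ℕ} (M : Matrix (Fin (m + 2)) (Fin (m + 2)) ℂ) :
    Pi.single 0 1 ᵥ* kdL M = M 0 0 • Pi.single 0 1 := by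
  rw [Matrix.single_one_vecMul]
  ext j
  simp [kdL, Pi.single_apply, Matrix.row]

theorem kdL_row1 {m : ℕ} (M : Matrix (Fin (m + 2)) (Fin (m + 2)) ℂ) :
    Pi.single 1 1 ᵥ* kdL M = M 0 0 • Pi.single 1 1 + M 1 0 • Pi.single 0 1 := by
  rw [Matrix.single_one_vecMul]
  ext j
  by_cases h : j = 0
  · subst h; simp [kdL, Pi.single_apply, Matrix.row]
  · simp [kdL, Pi.single_apply, Matrix.row, h]

theorem kdL_of_shape {m : ℕ} (T : Matrix (Fin (m + 2)) (Fin (m + 2)) ℂ) (l a : ℂ)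
    (h0 : Pi.single 0 1 ᵥ* T = l • Pi.single 0 1)
    (h1 : Pi.single 1 1 ᵥ* T = l • Pi.single 1 1 + a • Pi.single 0 1) (s : ℂ) :
    kdL (s • T) = s • T := by
  rw [Matrix.single_one_vecMul] at h0 h1
  have h0' : ∀ j, T 0 j = l * (Pi.single 0 1 : Fin (m + 2) → ℂ) j := fun j => congrFun h0 j
  have h1' : ∀ j, T 1 j = l * (Pi.single 1 1 : Fin (m + 2) → ℂ) j
      + a * (Pi.single 0 1 : Fin (m + 2) → ℂ) j := fun j => congrFun h1 j
  ext i j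
  by_cases hi : i = 0
  · subst hi
    by_cases hj : j = 0
    · subst hj; simp [kdL]
    · simp [kdL, hj, h0']
  · by_cases hi1 : i = 1
    · subst hi1
      by_cases hj : j = 0
      · subst hj; simp [kdL]
      · by_cases hj1 : j = 1
        · subst hj1; simp [kdL, h0', h1']
        · simp [kdL, hj, hj1, h1']
    · simp [kdL, hi, hi1]

theorem kd_hyper {m : ℕ} (Δ : MvPolynomial (Fin (m + 2) × Fin (m + 2)) ℂ)
    (hΔ0 : Δ ≠ 0)
    (hΔ : ∀ B : Matrix (Fin (m + 2)) (Fin (m + 2)) ℂ,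
      MvPolynomial.eval (fun ij => B ij.1 ij.2) Δ = 0 ↔ ¬ B.charpoly.roots.Nodup)
    (q : MvPolynomial (Fin (m + 2) × Fin (m + 2)) ℂ) (hq : Irreducible q) (hqΔ : q ∣ Δ)
    (B : Matrix (Fin (m + 2)) (Fin (m + 2)) ℂ) (hB : ¬ B.charpoly.roots.Nodup) :
    MvPolynomial.eval (fun ij => B ij.1 ij.2) q = 0 := by
  let I := Fin (m + 2) × Fin (m + 2)
  let R := MvPolynomial (I ⊕ I) ℂ
  let Gm : Matrix (Fin (m + 2)) (Fin (m + 2)) R :=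
    Matrix.of fun i j => MvPolynomial.X (Sum.inl (i, j))
  let Tm : Matrix (Fin (m + 2)) (Fin (m + 2)) R :=
    Matrix.of fun i j => MvPolynomial.X (Sum.inr (i, j))
  let Fm := Gm * kdL Tm * Gm.adjugate
  let φ : MvPolynomial I ℂ →ₐ[ℂ] R := MvPolynomial.aeval fun ij => Fm ij.1 ij.2
  have hφ : ∀ (x : I ⊕ I → ℂ) (G T : Matrix (Fin (m + 2)) (Fin (m + 2)) ℂ)
      (_ : ∀ i j, x (Sum.inl (i, j)) = G i j) (_ : ∀ i j, x (Sum.inr (i, j)) = T i j)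
      (p : MvPolynomial I ℂ), MvPolynomial.eval x (φ p) =
      MvPolynomial.eval (fun ij => (G * kdL T * G.adjugate) ij.1 ij.2) p := by
    intro x G T hG hT p
    have e1 : Gm.map (MvPolynomial.eval x) = G := by
      ext i j; simp [Gm, hG]
    have e2 : (kdL Tm).map (MvPolynomial.eval x) = kdL T := by
      ext i j
      simp only [kdL, Tm, Matrix.map_apply, Matrix.of_apply]
      split_ifs <;> simp [hT]
    have e3 : Fm.map (MvPolynomial.eval x) = G * kdL T * G.adjugate := by
      simp only [Fm]
      rw [Matrix.map_mul, Matrix.map_mul, e1, e2]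
      congr 1
      rw [← e1]
      exact RingHom.map_adjugate _ _
    have e4 : (MvPolynomial.eval x).comp φ.toRingHom =
        MvPolynomial.eval (fun ij : I => (G * kdL T * G.adjugate) ij.1 ij.2) := by
      apply MvPolynomial.ringHom_ext
      · intro r
        simp only [φ, AlgHom.toRingHom_eq_coe, RingHom.comp_apply, RingHom.coe_coe,
          MvPolynomial.aeval_C, MvPolynomial.eval_C]
        exact MvPolynomial.eval_C (f := x) r
      · intro ij
        rw [← e3]
        simp [φ]
    exact congrArg (fun f : MvPolynomial I ℂ →+* ℂ => f p) e4
  have hdet : Gm.det ≠ 0 := by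
    intro h0
    have h1 := congrArg (MvPolynomial.eval (Sum.elim (fun ij : I =>
      (1 : Matrix (Fin (m + 2)) (Fin (m + 2)) ℂ) ij.1 ij.2) (fun _ => 0))) h0
    rw [RingHom.map_det, map_zero] at h1
    have : (MvPolynomial.eval (Sum.elim (fun ij : I =>
      (1 : Matrix (Fin (m + 2)) (Fin (m + 2)) ℂ) ij.1 ij.2) (fun _ => 0))).mapMatrix Gm = 1 := by
      ext i j; simp [Gm]
    rw [this, Matrix.det_one] at h1
    exact one_ne_zero h1
  have hker : φ Δ = 0 := by
    have : Gm.det * φ Δ = 0 := by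
      apply MvPolynomial.funext
      intro x
      set G : Matrix (Fin (m + 2)) (Fin (m + 2)) ℂ := Matrix.of fun i j => x (Sum.inl (i, j))
        with hG
      set T : Matrix (Fin (m + 2)) (Fin (m + 2)) ℂ := Matrix.of fun i j => x (Sum.inr (i, j))
        with hT
      have e1 : (MvPolynomial.eval x).mapMatrix Gm = G := by
        ext i j; simp [Gm, hG]
      rw [map_mul, RingHom.map_det, e1, hφ x G T (by simp [hG]) (by simp [hT]), map_zero]
      by_cases hd : G.det = 0
      · rw [hd, zero_mul]
      · rw [mul_eq_zero]; right
        rw [hΔ]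
        have e2 : G * kdL T * G.adjugate =
            G * (kdL (G.det • kdL T)) * G⁻¹ := by
          rw [kdL_of_shape _ _ _ (kdL_row0 T) (kdL_row1 T), Matrix.inv_def,
            Ring.inverse_eq_inv', Matrix.mul_smul, Matrix.mul_smul, Matrix.smul_mul, smul_smul,
            inv_mul_cancel₀ hd, one_smul]
        rw [e2, kd_charpoly_conj _ _ _ (Matrix.nonsing_inv_mul _ (isUnit_iff_ne_zero.2 hd))]
        exact kd_shape _ 0 1 (by simp) _ _ (kdL_row0 _) (kdL_row1 _)
    exact (mul_eq_zero.1 this).resolve_left hdet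
  have hkp : (RingHom.ker φ.toRingHom).IsPrime := RingHom.ker_isPrime _
  have hne : RingHom.ker φ.toRingHom ≠ ⊥ := by
    intro h
    apply hΔ0
    have : Δ ∈ RingHom.ker φ.toRingHom := hker
    rw [h] at this
    exact this
  obtain ⟨q0, hq0, hq0p⟩ := hkp.exists_mem_prime_of_ne_bot hne
  have hq0' : φ q0 = 0 := hq0
  have hvan : ∀ B : Matrix (Fin (m + 2)) (Fin (m + 2)) ℂ, ¬ B.charpoly.roots.Nodup →
      MvPolynomial.eval (fun ij => B ij.1 ij.2) q0 = 0 := by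
    intro B hB
    obtain ⟨H, G, T, l, a, hHG, hGH, hBe, h0, h1⟩ := kd_exists_shape B hB
    have hd : G.det ≠ 0 := by
      intro h0
      have := congrArg Matrix.det hGH
      rw [Matrix.det_mul, h0] at this
      simp at this
    have hH : G⁻¹ = H := Matrix.inv_eq_right_inv hGH
    have h2 := hφ (Sum.elim (fun ij => G ij.1 ij.2) (fun ij => ((G.det)⁻¹ • T) ij.1 ij.2)) G
      ((G.det)⁻¹ • T) (by simp) (by simp) q0
    rw [hq0', map_zero, kdL_of_shape _ _ _ h0 h1] at h2
    have e2 : G * ((G.det)⁻¹ • T) * G.adjugate = B := by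
      rw [hBe, ← hH, Matrix.inv_def, Ring.inverse_eq_inv', Matrix.mul_smul, Matrix.mul_smul,
        Matrix.smul_mul]
    rw [e2] at h2
    exact h2.symm
  have hdvd : q ∣ q0 := by
    apply kd_null _ _ hq
    intro x hx
    obtain ⟨r, hr⟩ := hqΔ
    have hx' : x = fun ij => (Matrix.of fun i j => x (i, j) :
      Matrix (Fin (m + 2)) (Fin (m + 2)) ℂ) ij.1 ij.2 := by
      ext ij; simp
    rw [hx']
    apply hvan
    rw [← hΔ, ← hx', hr, map_mul, hx, zero_mul]
  obtain ⟨u, hu⟩ := (hq.associated_of_dvd hq0p.irreducible hdvd).symm.dvd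
  rw [hu, map_mul, hvan B hB, zero_mul]


def kdE : Module.End ℂ (ℕ → ℂ) := LinearMap.funLeft ℂ ℂ (· + 1)

theorem kdE_pow (μ : ℂ) (N : ℕ) (h : ℂ → ℂ) :
    ((kdE - μ • (1 : Module.End ℂ (ℕ → ℂ))) ^ N) (fun i => h i * μ ^ i) =
      fun i => μ ^ (i + N) * ((fwdDiff (1 : ℂ))^[N] h) i := by
  induction N generalizing h with
  | zero => funext i; simp [mul_comm]
  | succ N ih =>
    rw [pow_succ, Module.End.mul_apply]
    have : (kdE - μ • (1 : Module.End ℂ (ℕ → ℂ))) (fun i : ℕ => h i * μ ^ i) =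
        fun i : ℕ => (μ • fwdDiff (1 : ℂ) h) i * μ ^ i := by
      funext i
      simp [kdE, LinearMap.funLeft_apply, fwdDiff]
      ring
    rw [this, ih]
    funext i
    rw [Function.iterate_succ_apply, fwdDiff_iter_const_smul]
    simp
    ring

theorem kd_expind {κ : Type*} [Fintype κ] (a : κ → ℕ) (Λ : κ → ℂ) (h0 : ∀ k, Λ k ≠ 0)
    (hinj : ∀ k l, Λ k = Λ l → a k = a l → k = l) (w : κ → ℂ)
    (hw : ∀ i : ℕ, ∑ k, w k * ((i : ℂ) ^ (a k) * Λ k ^ i) = 0) : w = 0 := by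
  classical
  let v : κ → ℕ → ℂ := fun k i => w k * ((i : ℂ) ^ (a k) * Λ k ^ i)
  have hv : ∀ k, v k ∈ Module.End.maxGenEigenspace kdE (Λ k) := by
    intro k
    rw [Module.End.mem_maxGenEigenspace]
    refine ⟨a k + 1, ?_⟩
    have := kdE_pow (Λ k) (a k + 1) (fun x => w k * x ^ (a k))
    have e : v k = fun i : ℕ => (fun x : ℂ => w k * x ^ (a k)) i * Λ k ^ i := by
      funext i; simp only [v]; ring
    rw [e, this]
    have e2 : (fun x : ℂ => w k * x ^ (a k)) = w k • (fun x : ℂ => x ^ (a k)) := by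
      funext x; simp
    rw [e2, fwdDiff_iter_const_smul, fwdDiff_iter_pow_eq_zero_of_lt (Nat.lt_succ_self _)]
    funext i; simp
  have hind := (iSupIndep_iff_finsetSum_eq_zero_imp_eq_zero _).1
    (Module.End.independent_maxGenEigenspace kdE)
    (Finset.univ.image Λ) (fun μ => ∑ k with Λ k = μ, v k)
    (by
      intro μ _
      refine Submodule.sum_mem _ fun k hk => ?_
      rw [← (Finset.mem_filter.1 hk).2]
      exact hv k)
    (by
      rw [Finset.sum_fiberwise_of_maps_to (fun k _ => Finset.mem_image_of_mem _ (Finset.mem_univ k))]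
      funext i
      rw [Finset.sum_apply]
      exact hw i)
  funext k0
  have h1 := hind (Λ k0) (Finset.mem_image_of_mem _ (Finset.mem_univ k0))
  let p : Polynomial ℂ := ∑ k with Λ k = Λ k0, Polynomial.C (w k) * Polynomial.X ^ (a k)
  have hp : p = 0 := by
    apply Polynomial.eq_zero_of_infinite_isRoot
    refine (Set.infinite_range_of_injective (Nat.cast_injective (R := ℂ))).mono ?_
    rintro _ ⟨i, rfl⟩
    have h2 := congrFun h1 i
    rw [Finset.sum_apply] at h2
    have : (∑ k with Λ k = Λ k0, w k * (i : ℂ) ^ (a k)) * Λ k0 ^ i = 0 := by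
      rw [Finset.sum_mul]
      refine Eq.trans (Finset.sum_congr rfl fun k hk => ?_) h2
      rw [← (Finset.mem_filter.1 hk).2]
      simp only [v]; ring
    have h3 := (mul_eq_zero.1 this).resolve_right (pow_ne_zero _ (h0 k0))
    change Polynomial.eval (i : ℂ) p = 0
    simp only [p, Polynomial.eval_finsetSum]
    simpa using h3
  have h4 : p.coeff (a k0) = w k0 := by
    simp only [p, Polynomial.finsetSum_coeff]
    rw [Finset.sum_eq_single k0]
    · simp
    · intro k hk hne
      rw [Polynomial.coeff_C_mul_X_pow, if_neg]
      intro h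
      exact hne (hinj _ _ (Finset.mem_filter.1 hk).2 h.symm)
    · intro h; simp at h
  rw [← h4, hp]; simp

/-- the test matrix -/
def kdJ {m : ℕ} (t : ℂ) (μ : Fin m → ℂ) : Matrix (Fin (m + 2)) (Fin (m + 2)) ℂ :=
  of (Fin.cons (Pi.single 0 1) (Fin.cons (Pi.single 1 1 + t • Pi.single 0 1)
    fun i => μ i • Pi.single i.succ.succ 1))

theorem kdJ_0 {m : ℕ} (t : ℂ) (μ : Fin m → ℂ) : kdJ t μ 0 = Pi.single 0 1 := rfl
theorem kdJ_1 {m : ℕ} (t : ℂ) (μ : Fin m → ℂ) :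
    kdJ t μ 1 = Pi.single 1 1 + t • Pi.single 0 1 := rfl
theorem kdJ_s {m : ℕ} (t : ℂ) (μ : Fin m → ℂ) (i : Fin m) :
    kdJ t μ i.succ.succ = μ i • Pi.single i.succ.succ 1 := rfl

theorem kdJ_mul {m : ℕ} (t s : ℂ) (μ ν : Fin m → ℂ) :
    kdJ t μ * kdJ s ν = kdJ (t + s) (μ * ν) := by
  funext i
  rw [Matrix.mul_apply_eq_vecMul]
  refine Fin.cases ?_ (fun i => Fin.cases ?_ (fun i => ?_) i) i
  · rw [kdJ_0, kdJ_0, Matrix.single_one_vecMul]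
    rfl
  · change kdJ t μ 1 ᵥ* _ = kdJ _ _ 1
    rw [kdJ_1, kdJ_1, Matrix.add_vecMul, Matrix.smul_vecMul, Matrix.single_one_vecMul,
      Matrix.single_one_vecMul]
    change kdJ s ν 1 + t • kdJ s ν 0 = _
    rw [kdJ_0, kdJ_1, add_smul]
    abel
  · rw [kdJ_s, kdJ_s, Matrix.smul_vecMul, Matrix.single_one_vecMul]
    change μ i • kdJ s ν i.succ.succ = _
    rw [kdJ_s, smul_smul]
    rfl

theorem kdJ_pow {m : ℕ} (t : ℂ) (μ : Fin m → ℂ) (k : ℕ) :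
    (kdJ t μ) ^ k = kdJ (k * t) (μ ^ k) := by
  induction k with
  | zero =>
    funext i
    have h : ∀ i : Fin (m + 2), (1 : Matrix (Fin (m + 2)) (Fin (m + 2)) ℂ) i = Pi.single i 1 := by
      intro i; funext j; rw [Matrix.one_eq_pi_single]
    rw [pow_zero, h]
    refine Fin.cases ?_ (fun i => Fin.cases ?_ (fun i => ?_) i) i
    · rfl
    · change _ = kdJ _ _ 1
      rw [kdJ_1]; simp
    · rw [kdJ_s]; simp
  | succ k ih =>
    rw [pow_succ, ih, kdJ_mul, pow_succ]
    congr 1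
    push_cast; ring

theorem kdJ_nodup {m : ℕ} (t : ℂ) (μ : Fin m → ℂ) : ¬ (kdJ t μ).charpoly.roots.Nodup := by
  refine kd_shape (kdJ t μ) 0 1 (by simp) 1 t ?_ ?_
  · rw [Matrix.single_one_vecMul, one_smul]; rfl
  · rw [Matrix.single_one_vecMul, one_smul]; rfl

theorem kdJ_sub_mono {m : ℕ} (t : ℂ) (μ : Fin m → ℂ) (e : Fin (m + 2) → ℕ) (h0 : e 0 = 0) :
    ∏ j : Fin (m + 2), (∑ k, MvPolynomial.C (kdJ t μ j k) * MvPolynomial.X k) ^ (e j) =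
    ∑ k ∈ Finset.range (e 1 + 1), MvPolynomial.monomial
      (Finsupp.equivFunOnFinite.symm
        (Fin.cons (e 1 - k) (Fin.cons k fun i : Fin m => e i.succ.succ) : Fin (m + 2) → ℕ))
      (((e 1).choose k : ℂ) * t ^ (e 1 - k) * ∏ j, μ j ^ e j.succ.succ) := by
  have h1 : (∑ k, MvPolynomial.C (kdJ t μ 1 k) * MvPolynomial.X k : MvPolynomial (Fin (m + 2)) ℂ)
      = MvPolynomial.X 1 + MvPolynomial.C t * MvPolynomial.X 0 := by
    rw [kdJ_1]
    simp only [Pi.add_apply, Pi.smul_apply, map_add, add_mul, Finset.sum_add_distrib, smul_eq_mul]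
    congr 1
    · rw [Finset.sum_eq_single 1]
      · simp
      · intro b _ hb; simp [Pi.single_apply, hb]
      · simp
    · rw [Finset.sum_eq_single 0]
      · simp
      · intro b _ hb; simp [Pi.single_apply, hb]
      · simp
  have h2 : ∀ i : Fin m,
      (∑ k, MvPolynomial.C (kdJ t μ i.succ.succ k) * MvPolynomial.X k :
        MvPolynomial (Fin (m + 2)) ℂ) = MvPolynomial.C (μ i) * MvPolynomial.X i.succ.succ := by
    intro i
    rw [kdJ_s]
    rw [Finset.sum_eq_single i.succ.succ]
    · simp
    · intro b _ hb; simp [Pi.single_apply, hb]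
    · simp
  rw [Fin.prod_univ_succ, h0, pow_zero, one_mul, Fin.prod_univ_succ]
  change (∑ k, MvPolynomial.C (kdJ t μ 1 k) * MvPolynomial.X k) ^ (e 1) * _ = _
  rw [h1, add_pow, Finset.sum_mul]
  refine Finset.sum_congr rfl fun k hk => ?_
  rw [MvPolynomial.monomial_eq, Finsupp.prod_fintype _ _ (by simp)]
  simp only [h2, mul_pow, Finset.prod_mul_distrib, map_mul, map_pow, map_natCast, map_prod]
  rw [Fin.prod_univ_succ, Fin.prod_univ_succ]
  simp only [Finsupp.coe_equivFunOnFinite_symm, Fin.cons_zero, Fin.cons_succ]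
  change MvPolynomial.X 1 ^ k * _ * _ * _ = _ * (_ * (MvPolynomial.X 1 ^ k * _))
  ring

def kdc (n d : ℕ) : MonIdx (n + 1) d → ℂ := fun τ => if monExp τ 0 = 0 then 1 else 0

theorem kdJ_vec {m d : ℕ} (t : ℂ) (μ : Fin m → ℂ) (σ : MonIdx (m + 2) d) :
    (kdc (m + 1) d ᵥ* symPow d (kdJ t μ)) σ =
      ((monExp σ 0 + monExp σ 1).choose (monExp σ 1) : ℂ) * t ^ (monExp σ 0) *
        ∏ j : Fin m, μ j ^ monExp σ j.succ.succ := by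
  obtain ⟨τ, hτ⟩ := kd_monExp_surj (d := d) (Finsupp.equivFunOnFinite.symm
        (Fin.cons 0 (Fin.cons (monExp σ 0 + monExp σ 1) fun i : Fin m => monExp σ i.succ.succ) :
          Fin (m + 2) → ℕ)) (by
      refine Eq.trans ?_ (kd_monExp_degree σ)
      rw [Finsupp.degree_eq_sum, Finsupp.degree_eq_sum,
        Fin.sum_univ_succ, Fin.sum_univ_succ, Fin.sum_univ_succ (n := m + 1), Fin.sum_univ_succ]
      simp [add_assoc])
  have e0 : monExp τ 0 = 0 := by rw [hτ]; rfl
  have e1 : monExp τ 1 = monExp σ 0 + monExp σ 1 := by rw [hτ]; rfl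
  have e2 : ∀ j : Fin m, monExp τ j.succ.succ = monExp σ j.succ.succ := by
    intro j; rw [hτ]; rfl
  have key : ∀ (e : Fin (m + 2) → ℕ) (k : ℕ), Finsupp.equivFunOnFinite.symm
        (Fin.cons (e 1 - k) (Fin.cons k fun i : Fin m => e i.succ.succ) : Fin (m + 2) → ℕ)
        = monExp σ ↔ (e 1 - k = monExp σ 0 ∧ k = monExp σ 1 ∧
          ∀ i : Fin m, e i.succ.succ = monExp σ i.succ.succ) := by
    intro e k
    rw [DFunLike.ext_iff, Fin.forall_fin_succ, Fin.forall_fin_succ]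
    rfl
  rw [Matrix.vecMul, dotProduct, Finset.sum_eq_single τ]
  · simp only [kdc, if_pos e0, one_mul, symPow, of_apply]
    rw [kdJ_sub_mono _ _ _ e0, MvPolynomial.coeff_sum, Finset.sum_eq_single (monExp σ 1)]
    · rw [MvPolynomial.coeff_monomial, if_pos]
      · simp only [e1, e2, Nat.add_sub_cancel]
      · rw [key]
        exact ⟨by rw [e1]; omega, rfl, e2⟩
    · intro k hk hne
      rw [MvPolynomial.coeff_monomial, if_neg]
      rw [key]
      exact fun h => hne h.2.1
    · intro h
      exact absurd (Finset.mem_range.2 (by rw [e1]; omega)) h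
  · intro τ' _ hne
    by_cases h0 : monExp τ' 0 = 0
    · simp only [kdc, if_pos h0, one_mul, symPow, of_apply]
      rw [kdJ_sub_mono _ _ _ h0, MvPolynomial.coeff_sum]
      refine Finset.sum_eq_zero fun k hk => ?_
      rw [MvPolynomial.coeff_monomial, if_neg]
      rw [key]
      rintro ⟨ha, hb, hc⟩
      apply hne
      apply kd_monExp_inj
      rw [DFunLike.ext_iff, Fin.forall_fin_succ, Fin.forall_fin_succ]
      refine ⟨by rw [e0, h0], ?_, fun i => by rw [hc, e2]⟩
      change monExp τ' 1 = monExp τ 1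
      have := Finset.mem_range.1 hk
      omega
    · simp [kdc, h0]
  · simp

theorem kd_exists_lam (m d : ℕ) : ∃ lam : Fin m → ℂ,
    (∀ j, lam j ≠ 0) ∧ ∀ e e' : Fin m → ℕ, ∏ j, lam j ^ e j = ∏ j, lam j ^ e' j → e = e' := by
  refine ⟨fun j => ((Nat.nth Nat.Prime j : ℕ) : ℂ), fun j => ?_, ?_⟩
  · exact Nat.cast_ne_zero.2 (Nat.prime_nth_prime j).ne_zero
  · intro e e' h
    have h' : ∏ j : Fin m, (Nat.nth Nat.Prime j) ^ e j = ∏ j : Fin m, (Nat.nth Nat.Prime j) ^ e' j := by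
      beta_reduce at h
      exact_mod_cast h
    have hf : ∀ (e : Fin m → ℕ) (i : Fin m),
        (∏ j : Fin m, (Nat.nth Nat.Prime j) ^ e j).factorization (Nat.nth Nat.Prime i) = e i := by
      intro e i
      rw [Nat.factorization_prod fun (j : Fin m) _ => pow_ne_zero _ (Nat.prime_nth_prime j).ne_zero,
        Finsupp.finsetSum_apply, Finset.sum_eq_single i]
      · rw [(Nat.prime_nth_prime i).factorization_pow]; simp
      · intro j _ hne
        rw [(Nat.prime_nth_prime j).factorization_pow, Finsupp.single_apply, if_neg]
        intro h
        exact hne (Fin.ext (Nat.nth_injective Nat.infinite_setOf_prime h))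
      · simp
    funext i
    rw [← hf e i, h', hf]

theorem kd_kalN_null {ι : Type*} [Fintype ι] [DecidableEq ι] (M : Matrix ι ι ℂ) (c : ι → ℂ)
    (h : (kalN M c).det = 0) : ∃ w : ι → ℂ, w ≠ 0 ∧ ∀ i : ℕ, (c ᵥ* M ^ i) ⬝ᵥ w = 0 := by
  obtain ⟨w, hw, h1⟩ := Matrix.exists_mulVec_eq_zero_iff.2 h
  refine ⟨w, hw, fun i => ?_⟩
  have h2 : ∀ k < Fintype.card ι, (c ᵥ* M ^ k) ⬝ᵥ w = 0 := by
    intro k hk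
    have := congrFun h1 ((Fintype.equivFin ι).symm ⟨k, hk⟩)
    simpa [kalN, Matrix.mulVec] using this
  rw [Matrix.pow_eq_aeval_mod_charpoly]
  by_cases hι : IsEmpty ι
  · simp [dotProduct]
  rw [not_isEmpty_iff] at hι
  rw [Polynomial.aeval_eq_sum_range' (n := Fintype.card ι)]
  · rw [← Matrix.dotProduct_mulVec, Matrix.sum_mulVec, dotProduct_sum]
    refine Finset.sum_eq_zero fun k hk => ?_
    rw [Matrix.smul_mulVec, dotProduct_smul, Matrix.dotProduct_mulVec, h2 k (Finset.mem_range.1 hk),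
      smul_zero]
  · have := Polynomial.natDegree_modByMonic_lt (Polynomial.X ^ i) M.charpoly_monic (by
      intro h
      have := M.charpoly_natDegree_eq_dim
      rw [h, Polynomial.natDegree_one] at this
      exact Fintype.card_ne_zero this.symm)
    rwa [M.charpoly_natDegree_eq_dim] at this

theorem kd_cyclic (m d : ℕ) : ∃ J : Matrix (Fin (m + 2)) (Fin (m + 2)) ℂ,
    ¬ J.charpoly.roots.Nodup ∧ ∃ c, (kalN (symPow d J) c).det ≠ 0 := by
  obtain ⟨lam, hl0, hl⟩ := kd_exists_lam m d
  refine ⟨kdJ 1 lam, kdJ_nodup _ _, kdc (m + 1) d, fun h => ?_⟩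
  obtain ⟨w, hw, h1⟩ := kd_kalN_null _ _ h
  have h2 := kd_expind (fun σ : MonIdx (m + 2) d => monExp σ 0)
    (fun σ => ∏ j : Fin m, lam j ^ monExp σ j.succ.succ)
    (fun σ => Finset.prod_ne_zero_iff.2 fun j _ => pow_ne_zero _ (hl0 j))
    (by
      intro σ τ ha hb
      have hc := hl _ _ ha
      have hs : (monExp σ).degree = (monExp τ).degree := by
        rw [kd_monExp_degree, kd_monExp_degree]
      rw [Finsupp.degree_eq_sum, Finsupp.degree_eq_sum, Fin.sum_univ_succ, Fin.sum_univ_succ,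
        Fin.sum_univ_succ (n := m + 1), Fin.sum_univ_succ, hb,
        Finset.sum_congr rfl fun j _ => congrFun hc j] at hs
      apply kd_monExp_inj
      rw [DFunLike.ext_iff, Fin.forall_fin_succ, Fin.forall_fin_succ]
      exact ⟨hb, by omega, fun i => congrFun hc i⟩)
    (fun σ => ((monExp σ 0 + monExp σ 1).choose (monExp σ 1) : ℂ) * w σ)
    (by
      intro i
      rw [← h1 i, ← kd_symPow_pow, kdJ_pow, dotProduct]
      refine Finset.sum_congr rfl fun σ _ => ?_
      rw [kdJ_vec]
      simp only [mul_one, Pi.pow_apply, ← Finset.prod_pow, ← pow_mul, mul_comm i]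
      ring)
  apply hw
  funext σ
  have := congrFun h2 σ
  refine (mul_eq_zero.1 this).resolve_left ?_
  exact_mod_cast (Nat.choose_pos (Nat.le_add_left _ _)).ne'


theorem kd_evalpt {n : ℕ} (p : MvPolynomial (Fin n × Fin n) ℂ) (x : Fin n × Fin n → ℂ) :
    MvPolynomial.eval x p =
      MvPolynomial.eval (fun ij => (of fun i j => x (i, j) : Matrix (Fin n) (Fin n) ℂ) ij.1 ij.2) p :=
  rfl

theorem kd_A {n d : ℕ} (Δ Δd : MvPolynomial (Fin n × Fin n) ℂ)
    (hΔ : ∀ B : Matrix (Fin n) (Fin n) ℂ,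
      MvPolynomial.eval (fun ij => B ij.1 ij.2) Δ = 0 ↔ ¬ B.charpoly.roots.Nodup)
    (hΔd : ∀ B : Matrix (Fin n) (Fin n) ℂ,
      MvPolynomial.eval (fun ij => B ij.1 ij.2) Δd = 0 ↔ ¬ (symPow d B).charpoly.roots.Nodup)
    (q : MvPolynomial (Fin n × Fin n) ℂ) (hq : Irreducible q) (h1 : q ∣ Δd) (h2 : ¬ q ∣ Δ)
    (c : MonIdx n d → ℂ) : q ∣ kalmanDet d c := by
  refine (hq.prime.dvd_or_dvd (a := Δ) ?_).resolve_left h2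
  refine kd_null _ _ hq fun x hx => ?_
  rw [map_mul, mul_eq_zero]
  by_cases hx2 : MvPolynomial.eval x Δ = 0
  · exact Or.inl hx2
  right
  have hxd : MvPolynomial.eval x Δd = 0 := by
    obtain ⟨r, rfl⟩ := h1
    rw [map_mul, hx, zero_mul]
  rw [kd_evalpt] at hx2 hxd ⊢
  rw [hΔ, not_not] at hx2
  rw [hΔd] at hxd
  rw [kd_eval_kalman]
  obtain ⟨P, Q, D, hPQ, hQP, hD, hB⟩ := kd_diag_of_nodup _ hx2
  rw [hB] at hxd ⊢
  have hPQ' : symPow d P * symPow d Q = 1 := by rw [← kd_symPow_mul, hPQ, kd_symPow_one]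
  have hQP' : symPow d Q * symPow d P = 1 := by rw [← kd_symPow_mul, hQP, kd_symPow_one]
  rw [kd_symPow_mul, kd_symPow_mul, kd_symPow_diag] at hxd ⊢
  rw [kd_charpoly_conj _ _ _ hQP', kd_nodup_diag] at hxd
  rw [kd_kalN_conj _ _ _ hPQ' hQP', Matrix.det_mul, kd_kalN_diag_zero _ _ hxd, zero_mul]

theorem kd_kalman_zero {n d : ℕ} (hn : 0 < n) : kalmanDet d (0 : MonIdx n d → ℂ) = 0 := by
  have : Nonempty (MonIdx n d) := ⟨Sym.replicate d ⟨0, hn⟩⟩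
  unfold kalmanDet
  have h : kalmanSq d (0 : MonIdx n d → ℂ) = 0 := by
    ext σ τ
    simp [kalmanSq]
  rw [h, Matrix.det_zero]

theorem kd_B {n d : ℕ} (Δd : MvPolynomial (Fin n × Fin n) ℂ)
    (hΔd : ∀ B : Matrix (Fin n) (Fin n) ℂ,
      MvPolynomial.eval (fun ij => B ij.1 ij.2) Δd = 0 ↔ ¬ (symPow d B).charpoly.roots.Nodup)
    (q : MvPolynomial (Fin n × Fin n) ℂ) (hq : Irreducible q)
    (h : ∀ c : MonIdx n d → ℂ, q ∣ kalmanDet d c) : q ∣ Δd := by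
  refine kd_null _ _ hq fun x hx => ?_
  rw [kd_evalpt, hΔd]
  intro hnd
  obtain ⟨c, hc⟩ := kd_exists_cyclic _ hnd
  apply hc
  rw [← kd_eval_kalman, ← kd_evalpt]
  obtain ⟨r, hr⟩ := h c
  rw [hr, map_mul, hx, zero_mul]

theorem kd_one (B : Matrix (Fin 1) (Fin 1) ℂ) : B.charpoly.roots.Nodup := by
  have : B = diagonal fun i => B i i := by
    ext i j
    fin_cases i; fin_cases j; simp
  rw [this, kd_nodup_diag]
  exact Function.injective_of_subsingleton _

theorem kd_noirr (Δ : MvPolynomial (Fin 1 × Fin 1) ℂ)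
    (hΔ : ∀ B : Matrix (Fin 1) (Fin 1) ℂ,
      MvPolynomial.eval (fun ij => B ij.1 ij.2) Δ = 0 ↔ ¬ B.charpoly.roots.Nodup)
    (q : MvPolynomial (Fin 1 × Fin 1) ℂ) (hq : Irreducible q) : ¬ q ∣ Δ := by
  rintro ⟨r, hr⟩
  apply hq.not_isUnit
  apply isUnit_of_dvd_one
  refine kd_null _ _ hq fun x hx => ?_
  exfalso
  have : MvPolynomial.eval x Δ = 0 := by rw [hr, map_mul, hx, zero_mul]
  rw [kd_evalpt, hΔ] at this
  exact this (kd_one _)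

theorem kd_C {m d : ℕ} (hd : 0 < d) (Δ Δd : MvPolynomial (Fin (m + 2) × Fin (m + 2)) ℂ)
    (hΔ : ∀ B : Matrix (Fin (m + 2)) (Fin (m + 2)) ℂ,
      MvPolynomial.eval (fun ij => B ij.1 ij.2) Δ = 0 ↔ ¬ B.charpoly.roots.Nodup)
    (hΔd : ∀ B : Matrix (Fin (m + 2)) (Fin (m + 2)) ℂ,
      MvPolynomial.eval (fun ij => B ij.1 ij.2) Δd = 0 ↔ ¬ (symPow d B).charpoly.roots.Nodup)
    (q : MvPolynomial (Fin (m + 2) × Fin (m + 2)) ℂ) (hq : Irreducible q) (h1 : q ∣ Δ) :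
    q ∣ Δd := by
  refine kd_null _ _ hq fun x hx => ?_
  have hx1 : MvPolynomial.eval x Δ = 0 := by
    obtain ⟨r, rfl⟩ := h1
    rw [map_mul, hx, zero_mul]
  rw [kd_evalpt, hΔ] at hx1
  rw [kd_evalpt, hΔd]
  obtain ⟨H, G, T, l, a, hHG, hGH, hA, r0, r1⟩ := kd_exists_shape _ hx1
  obtain ⟨k, rfl⟩ : ∃ k, d = k + 1 := ⟨d - 1, by omega⟩
  rw [hA, kd_symPow_mul, kd_symPow_mul, kd_charpoly_conj]
  · exact kd_symPow_shape T l a r0 r1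
  · rw [← kd_symPow_mul, hHG, kd_symPow_one]

/-- determinant of the Kalman matrix as a polynomial in `c` -/
def kdPoly {ι : Type*} [Fintype ι] [DecidableEq ι] (M : Matrix ι ι ℂ) : MvPolynomial ι ℂ :=
  (of fun σ τ => ∑ κ, MvPolynomial.X κ *
    MvPolynomial.C ((M ^ ((Fintype.equivFin ι) σ : ℕ)) κ τ) : Matrix ι ι (MvPolynomial ι ℂ)).det

theorem kdPoly_eval {ι : Type*} [Fintype ι] [DecidableEq ι] (M : Matrix ι ι ℂ) (c : ι → ℂ) :
    MvPolynomial.eval c (kdPoly M) = (kalN M c).det := by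
  rw [kdPoly, RingHom.map_det]
  congr 1
  ext σ τ
  simp [kalN, Matrix.vecMul, dotProduct]

theorem kd_D {n d : ℕ} (hn : 0 < n) (Δ : MvPolynomial (Fin n × Fin n) ℂ)
    (hΔ : ∀ B : Matrix (Fin n) (Fin n) ℂ,
      MvPolynomial.eval (fun ij => B ij.1 ij.2) Δ = 0 ↔ ¬ B.charpoly.roots.Nodup) :
    ∃ U : Set (MonIdx n d → ℂ), zOpen U ∧ zDense U ∧ ∀ c ∈ U,
      ∀ q : MvPolynomial (Fin n × Fin n) ℂ, Irreducible q → q ∣ Δ → ¬ q ∣ kalmanDet d c := by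
  obtain rfl | ⟨m, rfl⟩ : n = 1 ∨ ∃ m, n = m + 2 := by
    rcases n with _ | _ | m
    · omega
    · exact Or.inl rfl
    · exact Or.inr ⟨m, rfl⟩
  · obtain ⟨h1, h2⟩ := kd_open_dense (1 : MvPolynomial (MonIdx 1 d) ℂ) one_ne_zero
    exact ⟨_, h1, h2, fun c _ q hq hqΔ => absurd hqΔ (kd_noirr Δ hΔ q hq)⟩
  · have hΔ0 : Δ ≠ 0 := by
      rintro rfl
      have := (hΔ (diagonal fun i => ((i : ℕ) : ℂ))).1 (by simp)
      rw [kd_nodup_diag] at this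
      apply this
      intro i j hij
      exact Fin.ext (Nat.cast_injective hij)
    obtain ⟨J, hJ, c0, hc0⟩ := kd_cyclic m d
    obtain ⟨h1, h2⟩ := kd_open_dense (kdPoly (symPow d J)) (by
      intro h
      rw [← kdPoly_eval, h] at hc0
      simp at hc0)
    refine ⟨_, h1, h2, fun c hc q hq hqΔ hqk => hc ?_⟩
    rw [kdPoly_eval, ← kd_eval_kalman]
    obtain ⟨r, hr⟩ := hqk
    rw [hr, map_mul, kd_hyper Δ hΔ0 hΔ q hq hqΔ J hJ, zero_mul]

theorem kd_main (n d : ℕ) (hn : 0 < n) (hd : 0 < d)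
    (Δ Δd : MvPolynomial (Fin n × Fin n) ℂ)
    (hΔ : ∀ B : Matrix (Fin n) (Fin n) ℂ,
      MvPolynomial.eval (fun ij => B ij.1 ij.2) Δ = 0 ↔ ¬ B.charpoly.roots.Nodup)
    (hΔd : ∀ B : Matrix (Fin n) (Fin n) ℂ,
      MvPolynomial.eval (fun ij => B ij.1 ij.2) Δd = 0 ↔ ¬ (symPow d B).charpoly.roots.Nodup) :
    ∃ U : Set (MonIdx n d → ℂ), zOpen U ∧ zDense U ∧ ∀ c ∈ U,
      (∀ q : MvPolynomial (Fin n × Fin n) ℂ, Irreducible q → q ∣ Δd →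
        q ∣ kalmanDet d c ∨ q ∣ Δ) ∧
      (∀ q : MvPolynomial (Fin n × Fin n) ℂ, Irreducible q →
        ((∀ c' : MonIdx n d → ℂ, c' ≠ 0 → q ∣ kalmanDet d c') ↔ (q ∣ Δd ∧ ¬ q ∣ Δ))) ∧
      (∀ q : MvPolynomial (Fin n × Fin n) ℂ, Irreducible q → q ∣ Δ →
        q ∣ Δd ∧ ¬ q ∣ kalmanDet d c) := by
  obtain ⟨U, hU1, hU2, hU⟩ := kd_D (d := d) hn Δ hΔ
  refine ⟨U, hU1, hU2, fun c hc => ⟨?_, ?_, ?_⟩⟩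
  · intro q hq h1
    by_cases h2 : q ∣ Δ
    · exact Or.inr h2
    · exact Or.inl (kd_A Δ Δd hΔ hΔd q hq h1 h2 c)
  · intro q hq
    constructor
    · intro h
      have h' : ∀ c' : MonIdx n d → ℂ, q ∣ kalmanDet d c' := by
        intro c'
        by_cases h0 : c' = 0
        · rw [h0, kd_kalman_zero hn]; exact dvd_zero _
        · exact h c' h0
      exact ⟨kd_B Δd hΔd q hq h', fun h2 => hU c hc q hq h2 (h' c)⟩
    · rintro ⟨h1, h2⟩ c' _
      exact kd_A Δ Δd hΔ hΔd q hq h1 h2 c'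
  · intro q hq h1
    refine ⟨?_, hU c hc q hq h1⟩
    rcases n with _ | _ | m
    · omega
    · exact absurd h1 (kd_noirr Δ hΔ q hq)
    · exact kd_C hd Δ Δd hΔ hΔd q hq h1

end

/-- For sufficiently generic `f ∈ ℂ[x]_d`: every irreducible factor of
`Δ_d` is a factor of `det K_d(f)` or of `Δ`, and in this way one obtains exactly the
irreducible factors of `det K_d(f)` that do not depend on `f`; moreover the irreducible
factors of `Δ` divide `Δ_d` but do not divide `det K_d(f)`. -/
theorem kalman_det_factors_from_discriminant (n d : ℕ) (hn : 0 < n) (hd : 0 < d)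
    (Δ Δd : MvPolynomial (Fin n × Fin n) ℂ)
    (hΔ : ∀ B : Matrix (Fin n) (Fin n) ℂ,
      MvPolynomial.eval (fun ij => B ij.1 ij.2) Δ = pairProdSq B.charpoly.roots)
    (hΔd : ∀ B : Matrix (Fin n) (Fin n) ℂ,
      MvPolynomial.eval (fun ij => B ij.1 ij.2) Δd = pairProdSq (symPow d B).charpoly.roots) :
    ∃ U : Set (MonIdx n d → ℂ), zOpen U ∧ zDense U ∧ ∀ c ∈ U,
      (∀ q : MvPolynomial (Fin n × Fin n) ℂ, Irreducible q → q ∣ Δd →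
        q ∣ kalmanDet d c ∨ q ∣ Δ) ∧
      (∀ q : MvPolynomial (Fin n × Fin n) ℂ, Irreducible q →
        ((∀ c' : MonIdx n d → ℂ, c' ≠ 0 → q ∣ kalmanDet d c') ↔ (q ∣ Δd ∧ ¬ q ∣ Δ))) ∧
      (∀ q : MvPolynomial (Fin n × Fin n) ℂ, Irreducible q → q ∣ Δ →
        q ∣ Δd ∧ ¬ q ∣ kalmanDet d c) := by
  exact kd_main n d hn hd Δ Δd (fun B => by rw [hΔ, kd_pair]) (fun B => by rw [hΔd, kd_pair])

end
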